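/- arXiv:2206.10123 — 5 statements merged into one kernel-verified Lean document; each statement's English description precedes it below -/
import Mathlib

section
/- Let X and Y be finite nonempty alphabets, P_X a probability mass function on X, W a channel with W(y|x) > 0 for all x, y and Σ_y W(y|x) = 1 for each x, U : X×Y → (0,∞), and R ∈ ℝ. For a channel Q (Q(y|x) ≥ 0, Σ_y Q(y|x) = 1), let Q_{XY}(x,y) = P_X(x)Q(y|x), Q_Y(y) = Σ_x Q_{XY}(x,y), and let E(Q) be the set of conditional probability assignments Q'(x|y) satisfying Σ_{x,y} Q_Y(y) Q'(x|y) log₂ U(x,y) ≥ Σ_{x,y} Q_{XY}(x,y) log₂ U(x,y). Then min over channels Q of { D(Q‖W|P_X) + [ H(P_X) − R − max_{Q'∈E(Q)} H_Q(X'|Y) ]_+ } = max_{ρ∈[0,1]} sup_{θ≥0} { −Σ_x P_X(x) log₂( Σ_y W(y|x) / U_θ(x|y)^ρ ) + ρ(H(P_X) − R) }, where U_θ(x|y) = U(x,y)^θ / Σ_{x'} U(x',y)^θ and H_Q(X'|Y) = −Σ_y Q_Y(y) Σ_x Q'(x|y) log₂ Q'(x|y). -/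
/-- Base-2 entropy of a probability mass function on a finite alphabet. -/
noncomputable def entropy2 {X : Type*} [Fintype X] (P : X → ℝ) : ℝ :=
  -∑ x, P x * Real.logb 2 (P x)

/-- The normalized metric `U_θ(x|y) = U(x,y)^θ / Σ_{x'} U(x',y)^θ`. -/
noncomputable def Utheta {X Y : Type*} [Fintype X] (U : X → Y → ℝ) (θ : ℝ)
    (x : X) (y : Y) : ℝ :=
  U x y ^ θ / ∑ x', U x' y ^ θ

/-- Weighted conditional divergence `D(Q‖W|P_X)` (base-2 logarithm). -/
noncomputable def condDiv2 {X Y : Type*} [Fintype X] [Fintype Y]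
    (P : X → ℝ) (Q W : X → Y → ℝ) : ℝ :=
  ∑ x, P x * ∑ y, Q x y * Real.logb 2 (Q x y / W x y)

/-!
For a fixed channel `Q`, Lagrange duality in the metric constraint and Gibbs' inequality give
`max_{Q' ∈ E(Q)} H_Q(X'|Y) = inf_{θ ≥ 0} -E_Q[log₂ U_θ(X|Y)]`. Since `[a]_+ = max_{ρ ∈ [0,1]} ρ a`,
the primal exponent becomes
`min_Q sup_{ρ,θ} { D(Q‖W|P_X) + ρ (H(P_X) - R + E_Q[log₂ U_θ(X|Y)]) }`,
and a second use of Gibbs' inequality evaluates the minimum over `Q` to the dual objective. It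
remains to exchange `min` and `sup`. The bracket is not concave in `(ρ, θ)`, but in the coordinates
`(ρ, μ) = (ρ, ρ θ)` with `ρ > 0` it is a minimum of affine functions, so that Sion's theorem
applies. Excluding `ρ = 0` does not change the supremum.
-/

section Order

theorem ciInf_eq_ciSup_ciSup {ι κ κ' α : Type*} [Nonempty ι] [Nonempty κ] [Nonempty κ']
    [ConditionallyCompleteLinearOrder α] {f : ι → α} {g : κ → κ' → α}
    (hle : ∀ i k l, g k l ≤ f i) (hlt : ∀ t, (∀ i, t < f i) → ∃ k l, t < g k l) :
    ⨅ i, f i = ⨆ k, ⨆ l, g k l := by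
  obtain ⟨i₀⟩ := ‹Nonempty ι›
  obtain ⟨k₀⟩ := ‹Nonempty κ›
  obtain ⟨l₀⟩ := ‹Nonempty κ'›
  have bddBelow_f : BddBelow (Set.range f) := ⟨g k₀ l₀, Set.forall_mem_range.2 (hle · k₀ l₀)⟩
  have bddAbove_g (k : κ) : BddAbove (Set.range (g k)) := ⟨f i₀, Set.forall_mem_range.2 (hle i₀ k)⟩
  have bddAbove_iSup : BddAbove (Set.range fun k => ⨆ l, g k l) :=
    ⟨f i₀, Set.forall_mem_range.2 fun k => ciSup_le (hle i₀ k)⟩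
  refine le_antisymm (le_of_forall_lt fun t ht => ?_)
    (ciSup_le fun k => ciSup_le fun l => le_ciInf fun i => hle i k l)
  obtain ⟨k, l, hkl⟩ := hlt t fun i => ht.trans_le (ciInf_le bddBelow_f i)
  exact hkl.trans_le ((le_ciSup (bddAbove_g k) l).trans (le_ciSup bddAbove_iSup k))

theorem exists_mem_Ioc_lt_add_mul {t d a : ℝ} (h : t < d + max a 0) :
    ∃ ρ ∈ Set.Ioc (0 : ℝ) 1, t < d + ρ * a := by
  rcases le_total 0 a with ha | ha
  · exact ⟨1, ⟨one_pos, le_rfl⟩, by rwa [one_mul, ← max_eq_left ha]⟩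
  · rw [max_eq_right ha, add_zero] at h
    have hlim : Filter.Tendsto (fun ρ => d + ρ * a) (nhdsWithin 0 (Set.Ioi 0)) (nhds d) :=
      tendsto_nhdsWithin_of_tendsto_nhds (Continuous.tendsto' (by fun_prop) _ _ (by simp))
    obtain ⟨ρ, hlt, hρ⟩ := ((hlim.eventually_const_lt h).and (Ioc_mem_nhdsGT one_pos)).exists
    exact ⟨ρ, hρ, hlt⟩

theorem mul_le_max_zero {ρ a : ℝ} (hρ : ρ ∈ Set.Icc (0 : ℝ) 1) : ρ * a ≤ max a 0 := by
  rcases le_total 0 a with ha | ha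
  · exact (mul_le_of_le_one_left ha hρ.2).trans (le_max_left a 0)
  · exact (mul_nonpos_of_nonneg_of_nonpos hρ.1 ha).trans (le_max_right a 0)

end Order

section Minimax

variable {ι F : Type*} {S : Set ι} {A : Set F} {ℓ : ι → F → ℝ} {f : F → ℝ}

theorem concaveOn_of_isLeast_image [AddCommGroup F] [Module ℝ F] (hA : Convex ℝ A)
    (hℓ : ∀ i ∈ S, ConcaveOn ℝ A (ℓ i)) (hf : ∀ y ∈ A, IsLeast ((ℓ · y) '' S) (f y)) :
    ConcaveOn ℝ A f := by
  refine ⟨hA, fun y hy z hz a b ha hb hab => ?_⟩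
  obtain ⟨i, hi, hfi⟩ := (hf _ (hA hy hz ha hb hab)).1
  calc a • f y + b • f z ≤ a • ℓ i y + b • ℓ i z := by
        gcongr
        · exact (hf y hy).2 ⟨i, hi, rfl⟩
        · exact (hf z hz).2 ⟨i, hi, rfl⟩
    _ ≤ ℓ i (a • y + b • z) := (hℓ i hi).2 hy hz ha hb hab
    _ = f (a • y + b • z) := hfi

theorem upperSemicontinuousOn_of_isLeast_image [TopologicalSpace F]
    (hℓ : ∀ i ∈ S, UpperSemicontinuousOn (ℓ i) A) (hf : ∀ y ∈ A, IsLeast ((ℓ · y) '' S) (f y)) :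
    UpperSemicontinuousOn f A := by
  intro y hy b hb
  obtain ⟨i, hi, hfi⟩ := (hf y hy).1
  filter_upwards [hℓ i hi y hy b (hfi.trans_lt hb), self_mem_nhdsWithin] with z hlt hz
  exact ((hf z hz).2 ⟨i, hi, rfl⟩).trans_lt hlt

variable {E β : Type*} [TopologicalSpace E] [AddCommGroup E] [Module ℝ E]
  [IsTopologicalAddGroup E] [ContinuousSMul ℝ E] [TopologicalSpace F] [AddCommGroup F]
  [Module ℝ F] [IsTopologicalAddGroup F] [ContinuousSMul ℝ F] [LinearOrder β] [DenselyOrdered β]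

/- Compactness of `K` supplies the finitely many `y` that Mathlib's version asks for, so that `A`
may be non-compact. -/
theorem exists_forall_lt_of_forall_exists_lt {K : Set E} {g : E → F → β} (hne : K.Nonempty)
    (hcompact : IsCompact K) (hK : Convex ℝ K) (hA : Convex ℝ A)
    (hlsc : ∀ y ∈ A, LowerSemicontinuousOn (g · y) K)
    (hconvex : ∀ y ∈ A, QuasiconvexOn ℝ K (g · y))
    (husc : ∀ x ∈ K, UpperSemicontinuousOn (g x) A)
    (hconcave : ∀ x ∈ K, QuasiconcaveOn ℝ A (g x))
    {t : β} (ht : ∀ x ∈ K, ∃ y ∈ A, t < g x y) : ∃ y ∈ A, ∀ x ∈ K, t < g x y := by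
  have hempty : K ∩ ⋂ y ∈ A, (g · y) ⁻¹' Set.Iic t = ∅ := by
    refine Set.eq_empty_of_forall_notMem fun x ⟨hx, hle⟩ => ?_
    obtain ⟨y, hy, hlt⟩ := ht x hx
    exact (Set.mem_iInter₂.1 hle y hy).not_gt hlt
  obtain ⟨s, hs⟩ :=
    (LowerSemicontinuousOn.inter_biInter_preimage_Iic_eq_empty_iff_exists_finset hcompact hlsc).1
      hempty
  refine Sion.exists_lt_iInf_of_lt_iInf_of_finite hne hcompact hlsc hconvex hA husc hconcave hK
    (s.finite_toSet.image Subtype.val) (Subtype.coe_image_subset A s) fun x hx => ?_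
  obtain ⟨y, hy, hlt⟩ := hs x hx
  exact ⟨y, Set.mem_image_of_mem _ hy, hlt⟩

end Minimax

/-- Channels `Z(j|i)` with input alphabet `I` and output alphabet `J`, that is, row-stochastic
matrices. Membership unfolds to the constraint used in `primal_dual_exponent_equality`. -/
def channels (I J : Type*) [Fintype J] : Set (I → J → ℝ) :=
  {Z | (∀ i j, 0 ≤ Z i j) ∧ ∀ i, ∑ j, Z i j = 1}

/-- The conditional mean `Σ_i c(i) Σ_j Z(j|i) log₂ V(i,j)`. Taking `V = Z` gives minus the
conditional entropy of `Z`. -/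
noncomputable def condMeanLog2 {I J : Type*} [Fintype I] [Fintype J]
    (c : I → ℝ) (Z V : I → J → ℝ) : ℝ :=
  ∑ i, c i * ∑ j, Z i j * Real.logb 2 (V i j)

section Gibbs

variable {I J : Type*} [Fintype J]

theorem channels_eq_pi_stdSimplex : channels I J = Set.univ.pi fun _ => stdSimplex ℝ J := by
  ext Z
  simp only [channels, stdSimplex, Set.mem_ofPred_eq, Set.mem_univ_pi, forall_and]

theorem convex_channels : Convex ℝ (channels I J) := by
  rw [channels_eq_pi_stdSimplex]
  exact convex_pi fun _ _ => convex_stdSimplex ℝ J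

theorem isCompact_channels : IsCompact (channels I J) := by
  rw [channels_eq_pi_stdSimplex]
  exact isCompact_univ_pi fun _ => isCompact_stdSimplex ℝ J

theorem channels_nonempty [Nonempty J] : (channels I J).Nonempty := by
  classical
  rw [channels_eq_pi_stdSimplex]
  exact Set.univ_pi_nonempty_iff.2 fun _ => ⟨_, single_mem_stdSimplex ℝ (Classical.arbitrary J)⟩

theorem div_sum_mem_channels [Nonempty J] {w : I → J → ℝ} (hw : ∀ i j, 0 < w i j) :
    (fun i j => w i j / ∑ j', w i j') ∈ channels I J := by
  have hsum (i : I) : 0 < ∑ j, w i j := Finset.sum_pos (fun j _ => hw i j) Finset.univ_nonempty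
  exact ⟨fun i j => (div_pos (hw i j) (hsum i)).le, fun i => by
    rw [← Finset.sum_div, div_self (hsum i).ne']⟩

theorem sub_le_mul_log_div {z v : ℝ} (hz : 0 ≤ z) (hv : 0 < v) : z - v ≤ z * Real.log (z / v) := by
  have h := mul_nonneg hv.le (InformationTheory.klFun_nonneg (div_nonneg hz hv.le))
  have hkl : v * InformationTheory.klFun (z / v) = z * Real.log (z / v) + v - z := by
    rw [InformationTheory.klFun_apply]
    field_simp
  linarith

theorem mul_logb_div {z v b : ℝ} (hv : v ≠ 0) :
    z * Real.logb b (z / v) = z * Real.logb b z - z * Real.logb b v := by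
  rcases eq_or_ne z 0 with rfl | hz
  · simp only [zero_mul, sub_zero]
  · rw [Real.logb_div hz hv, mul_sub]

variable [Fintype I] {c : I → ℝ} {Z V w : I → J → ℝ}

theorem condDiv2_eq_condMeanLog2_sub (hV : ∀ i j, V i j ≠ 0) :
    condDiv2 c Z V = condMeanLog2 c Z Z - condMeanLog2 c Z V := by
  simp only [condDiv2, condMeanLog2, ← Finset.sum_sub_distrib, ← mul_sub, mul_logb_div (hV _ _)]

theorem condMeanLog2_rpow (hV : ∀ i j, 0 < V i j) (θ : ℝ) :
    condMeanLog2 c Z (fun i j => V i j ^ θ) = θ * condMeanLog2 c Z V := by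
  simp only [condMeanLog2, Real.logb_rpow_eq_mul_logb_of_pos (hV _ _), Finset.mul_sum,
    mul_left_comm]

theorem condMeanLog2_div (hV : ∀ i j, V i j ≠ 0) (hw : ∀ i j, w i j ≠ 0) :
    condMeanLog2 c Z (fun i j => V i j / w i j) = condMeanLog2 c Z V - condMeanLog2 c Z w := by
  simp only [condMeanLog2, Real.logb_div (hV _ _) (hw _ _), mul_sub, Finset.sum_sub_distrib]

theorem condMeanLog2_const_right (hZ : Z ∈ channels I J) (s : I → ℝ) :
    condMeanLog2 c Z (fun i _ => s i) = ∑ i, c i * Real.logb 2 (s i) := by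
  simp only [condMeanLog2, ← Finset.sum_mul, hZ.2, one_mul]

theorem condMeanLog2_mono (hc : ∀ i, 0 ≤ c i) (hZ : ∀ i j, 0 ≤ Z i j) (hV : ∀ i j, 0 < V i j)
    (hVw : ∀ i j, V i j ≤ w i j) : condMeanLog2 c Z V ≤ condMeanLog2 c Z w :=
  Finset.sum_le_sum fun i _ => mul_le_mul_of_nonneg_left
    (Finset.sum_le_sum fun j _ => mul_le_mul_of_nonneg_left
      (Real.logb_le_logb_of_le one_lt_two (hV i j) (hVw i j)) (hZ i j)) (hc i)

theorem condDiv2_self (hV : ∀ i j, V i j ≠ 0) : condDiv2 c V V = 0 := by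
  rw [condDiv2_eq_condMeanLog2_sub hV, sub_self]

theorem condDiv2_nonneg (hc : ∀ i, 0 ≤ c i) (hZ : Z ∈ channels I J) (hV : V ∈ channels I J)
    (hV0 : ∀ i j, 0 < V i j) : 0 ≤ condDiv2 c Z V := by
  refine Finset.sum_nonneg fun i _ => mul_nonneg (hc i) ?_
  have hlog : 0 ≤ ∑ j, Z i j * Real.log (Z i j / V i j) :=
    calc 0 = ∑ j, (Z i j - V i j) := by rw [Finset.sum_sub_distrib, hZ.2, hV.2, sub_self]
      _ ≤ _ := Finset.sum_le_sum fun j _ => sub_le_mul_log_div (hZ.1 i j) (hV0 i j)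
  simp only [Real.logb, ← mul_div_assoc, ← Finset.sum_div]
  exact div_nonneg hlog (Real.log_pos one_lt_two).le

theorem isLeast_condDiv2_image_channels [Nonempty J] (hc : ∀ i, 0 ≤ c i)
    (hw : ∀ i j, 0 < w i j) :
    IsLeast ((condDiv2 c · w) '' channels I J) (-∑ i, c i * Real.logb 2 (∑ j, w i j)) := by
  have hsum (i : I) : 0 < ∑ j, w i j := Finset.sum_pos (fun j _ => hw i j) Finset.univ_nonempty
  set V : I → J → ℝ := fun i j => w i j / ∑ j', w i j' with hVdef
  have hV : V ∈ channels I J := div_sum_mem_channels hw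
  have hV0 (i : I) (j : J) : 0 < V i j := div_pos (hw i j) (hsum i)
  have hnormalize {Z : I → J → ℝ} (hZ : Z ∈ channels I J) :
      condDiv2 c Z w = condDiv2 c Z V - ∑ i, c i * Real.logb 2 (∑ j, w i j) := by
    rw [condDiv2_eq_condMeanLog2_sub fun i j => (hw i j).ne',
      condDiv2_eq_condMeanLog2_sub fun i j => (hV0 i j).ne', hVdef,
      condMeanLog2_div (fun i j => (hw i j).ne') fun i _ => (hsum i).ne',
      condMeanLog2_const_right hZ]
    ring
  refine ⟨⟨V, hV, ?_⟩, Set.forall_mem_image.2 fun Z hZ => ?_⟩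
  · simp only [hnormalize hV, condDiv2_self fun i j => (hV0 i j).ne', zero_sub]
  · rw [hnormalize hZ, neg_eq_zero_sub]
    exact sub_le_sub_right (condDiv2_nonneg hc hZ hV hV0) _

theorem continuous_condDiv2 (hV : ∀ i j, V i j ≠ 0) : Continuous (condDiv2 c · V) := by
  have hmul_logb : Continuous fun x : ℝ => x * Real.logb 2 x := by
    simpa only [Real.logb, mul_div_assoc] using Real.continuous_mul_log.div_const (Real.log 2)
  simp only [condDiv2, mul_logb_div (hV _ _)]
  exact continuous_finsetSum _ fun i _ => continuous_const.mul <| continuous_finsetSum _ fun j _ =>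
    (hmul_logb.comp (continuous_apply_apply i j)).sub (by fun_prop)

theorem convexOn_condDiv2 (hc : ∀ i, 0 ≤ c i) (hV : ∀ i j, V i j ≠ 0) :
    ConvexOn ℝ (channels I J) (condDiv2 c · V) := by
  have hterm (i : I) (j : J) :
      ConvexOn ℝ (Set.Ici 0) fun z => z * Real.logb 2 (z / V i j) := by
    have hlog := Real.convexOn_mul_log.smul (inv_nonneg.2 (Real.log_pos one_lt_two).le)
    have hlin := (LinearMap.mulRight ℝ (Real.logb 2 (V i j))).concaveOn (convex_Ici 0)
    refine (hlog.sub hlin).congr fun z _ => ?_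
    rw [mul_logb_div (hV i j)]
    simp only [Pi.sub_apply, LinearMap.mulRight_apply, smul_eq_mul, Real.logb]
    ring
  refine ⟨convex_channels, fun Z hZ Z' hZ' a b ha hb hab => ?_⟩
  simp only [condDiv2, smul_eq_mul, Finset.mul_sum, ← Finset.sum_add_distrib]
  refine Finset.sum_le_sum fun i _ => Finset.sum_le_sum fun j _ => ?_
  have h := mul_le_mul_of_nonneg_left ((hterm i j).2 (hZ.1 i j) (hZ'.1 i j) ha hb hab) (hc i)
  simp only [smul_eq_mul] at h
  simp only [Pi.add_apply, Pi.smul_apply, smul_eq_mul]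
  linarith

end Gibbs

/-- The output distribution `Q_Y(y) = Σ_x P_X(x) Q(y|x)`. -/
def outputDist {X Y : Type*} [Fintype X] (P : X → ℝ) (Q : X → Y → ℝ) (y : Y) : ℝ :=
  ∑ x, P x * Q x y

/-- The set `E(Q)` of conditional assignments `Q'(x|y)`, written so that membership unfolds to the
constraint used in `primal_dual_exponent_equality`. -/
def admissible {X Y : Type*} [Fintype X] [Fintype Y] (P : X → ℝ) (U Q : X → Y → ℝ) :
    Set (Y → X → ℝ) :=
  {Z | Z ∈ channels Y X ∧ ∑ x, ∑ y, P x * Q x y * Real.logb 2 (U x y) ≤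
    condMeanLog2 (outputDist P Q) Z fun y x => U x y}

/-- The amount `E_Q[log₂ U(X,Y)] - E_Q[log₂ U(X',Y)]` by which `Z = Q'(x|y)` violates the
constraint defining `E(Q)`. -/
noncomputable def metricGap {X Y : Type*} [Fintype X] [Fintype Y] (P : X → ℝ)
    (U Q : X → Y → ℝ) (Z : Y → X → ℝ) : ℝ :=
  condMeanLog2 P Q U - condMeanLog2 (outputDist P Q) Z fun y x => U x y

/-- The inner maximum `max_{Q' ∈ E(Q)} H_Q(X'|Y)`. -/
noncomputable def maxCondEntropy {X Y : Type*} [Fintype X] [Fintype Y] (P : X → ℝ)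
    (U Q : X → Y → ℝ) : ℝ :=
  ⨆ Z : admissible P U Q, -condMeanLog2 (outputDist P Q) Z.1 Z.1

/-- The objective minimized over `Q` in the primal form, with `r` in place of `H(P_X) - R`. -/
noncomputable def primalObjective {X Y : Type*} [Fintype X] [Fintype Y] (P : X → ℝ)
    (W U : X → Y → ℝ) (r : ℝ) (Q : X → Y → ℝ) : ℝ :=
  condDiv2 P Q W + max (r - maxCondEntropy P U Q) 0

/-- The objective maximized over `(ρ, θ)` in the dual form, with `r` in place of `H(P_X) - R`. -/
noncomputable def dualObjective {X Y : Type*} [Fintype X] [Fintype Y] (P : X → ℝ)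
    (W U : X → Y → ℝ) (r ρ θ : ℝ) : ℝ :=
  -∑ x, P x * Real.logb 2 (∑ y, W x y / Utheta U θ x y ^ ρ) + ρ * r

/-- The payoff `D(Q‖W|P_X) + ρ (r + E_Q[log₂ U_θ(X|Y)])` of the minimax problem linking the primal
and dual forms. -/
noncomputable def saddleObjective {X Y : Type*} [Fintype X] [Fintype Y] (P : X → ℝ)
    (W U : X → Y → ℝ) (r ρ θ : ℝ) (Q : X → Y → ℝ) : ℝ :=
  condDiv2 P Q W + ρ * (r + condMeanLog2 P Q (Utheta U θ))

section Duality

variable {X Y : Type*} [Fintype X] {P : X → ℝ} {W U Q : X → Y → ℝ} {Z : Y → X → ℝ}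

theorem outputDist_nonneg (hP : ∀ x, 0 ≤ P x) (hQ : ∀ x y, 0 ≤ Q x y) (y : Y) :
    0 ≤ outputDist P Q y :=
  Finset.sum_nonneg fun x _ => mul_nonneg (hP x) (hQ x y)

theorem Utheta_pos [Nonempty X] (hU : ∀ x y, 0 < U x y) (θ : ℝ) (x : X) (y : Y) :
    0 < Utheta U θ x y :=
  div_pos (Real.rpow_pos_of_pos (hU x y) θ)
    (Finset.sum_pos (fun x' _ => Real.rpow_pos_of_pos (hU x' y) θ) Finset.univ_nonempty)

variable [Fintype Y]

theorem condMeanLog2_const_left (s : Y → ℝ) :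
    condMeanLog2 P Q (fun _ y => s y) = ∑ y, outputDist P Q y * Real.logb 2 (s y) := by
  simp only [condMeanLog2, outputDist, Finset.mul_sum, Finset.sum_mul, ← mul_assoc]
  exact Finset.sum_comm

theorem mem_admissible_iff : Z ∈ admissible P U Q ↔ Z ∈ channels Y X ∧ metricGap P U Q Z ≤ 0 := by
  simp only [admissible, metricGap, sub_nonpos, condMeanLog2, Finset.mul_sum, mul_assoc,
    Set.mem_ofPred_eq]

theorem admissible_nonempty [Nonempty X] (hP : ∀ x, 0 ≤ P x) (hU : ∀ x y, 0 < U x y)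
    (hQ : ∀ x y, 0 ≤ Q x y) : (admissible P U Q).Nonempty := by
  classical
  choose m hm using fun y => Finite.exists_max (U · y)
  refine ⟨fun y => Pi.single (m y) 1, mem_admissible_iff.2
    ⟨⟨fun y => (single_mem_stdSimplex ℝ (m y)).1, fun y => (single_mem_stdSimplex ℝ (m y)).2⟩,
      sub_nonpos.2 ?_⟩⟩
  calc condMeanLog2 P Q U ≤ condMeanLog2 P Q fun _ y => U (m y) y :=
        condMeanLog2_mono hP hQ hU fun x y => hm y x
    _ = ∑ y, outputDist P Q y * Real.logb 2 (U (m y) y) := condMeanLog2_const_left _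
    _ = condMeanLog2 (outputDist P Q) (fun y => Pi.single (m y) 1) fun y x => U x y := by
        simp only [condMeanLog2, Pi.single_apply, ite_mul, one_mul, zero_mul, Finset.sum_ite_eq',
          Finset.mem_univ, if_true]

theorem condMeanLog2_Utheta [Nonempty X] (hU : ∀ x y, 0 < U x y) (θ : ℝ) :
    condMeanLog2 P Q (Utheta U θ) =
      θ * condMeanLog2 P Q U - ∑ y, outputDist P Q y * Real.logb 2 (∑ x, U x y ^ θ) := by
  have hpow (x : X) (y : Y) : 0 < U x y ^ θ := Real.rpow_pos_of_pos (hU x y) θ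
  have hsum (y : Y) : 0 < ∑ x, U x y ^ θ :=
    Finset.sum_pos (fun x _ => hpow x y) Finset.univ_nonempty
  calc condMeanLog2 P Q (Utheta U θ) =
        condMeanLog2 P Q (fun x y => U x y ^ θ) - condMeanLog2 P Q fun _ y => ∑ x, U x y ^ θ :=
        condMeanLog2_div (fun x y => (hpow x y).ne') fun _ y => (hsum y).ne'
    _ = _ := by rw [condMeanLog2_rpow hU, condMeanLog2_const_left]

theorem condDiv2_rpow_add_mul_eq (hU : ∀ x y, 0 < U x y) (θ : ℝ) :
    condDiv2 (outputDist P Q) Z (fun y x => U x y ^ θ) + θ * condMeanLog2 P Q U =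
      condMeanLog2 (outputDist P Q) Z Z + θ * metricGap P U Q Z := by
  rw [condDiv2_eq_condMeanLog2_sub fun y x => (Real.rpow_pos_of_pos (hU x y) θ).ne',
    condMeanLog2_rpow fun y x => hU x y, metricGap]
  ring

theorem isLeast_lagrangian [Nonempty X] (hP : ∀ x, 0 ≤ P x) (hU : ∀ x y, 0 < U x y)
    (hQ : ∀ x y, 0 ≤ Q x y) (θ : ℝ) :
    IsLeast ((fun Z => condMeanLog2 (outputDist P Q) Z Z + θ * metricGap P U Q Z) '' channels Y X)
      (condMeanLog2 P Q (Utheta U θ)) := by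
  have h := (monotone_id.add_const (θ * condMeanLog2 P Q U)).map_isLeast <|
    isLeast_condDiv2_image_channels (outputDist_nonneg hP hQ)
      fun y x => Real.rpow_pos_of_pos (hU x y) θ
  rw [Set.image_image] at h
  simp only [id, condDiv2_rpow_add_mul_eq hU] at h
  rwa [condMeanLog2_Utheta hU, sub_eq_neg_add]

theorem neg_condMeanLog2_self_le [Nonempty X] (hP : ∀ x, 0 ≤ P x) (hU : ∀ x y, 0 < U x y)
    (hQ : ∀ x y, 0 ≤ Q x y) (hZ : Z ∈ admissible P U Q) {θ : ℝ} (hθ : 0 ≤ θ) :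
    -condMeanLog2 (outputDist P Q) Z Z ≤ -condMeanLog2 P Q (Utheta U θ) := by
  obtain ⟨hZ, hgap⟩ := mem_admissible_iff.1 hZ
  have hmin := (isLeast_lagrangian hP hU hQ θ).2 ⟨Z, hZ, rfl⟩
  have hpenalty := mul_nonpos_of_nonneg_of_nonpos hθ hgap
  dsimp only at hmin
  linarith

theorem neg_condMeanLog2_self_le_maxCondEntropy [Nonempty X] (hP : ∀ x, 0 ≤ P x)
    (hU : ∀ x y, 0 < U x y) (hQ : ∀ x y, 0 ≤ Q x y) (hZ : Z ∈ admissible P U Q) :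
    -condMeanLog2 (outputDist P Q) Z Z ≤ maxCondEntropy P U Q :=
  le_ciSup (f := fun Z : admissible P U Q => -condMeanLog2 (outputDist P Q) Z.1 Z.1)
    ⟨_, Set.forall_mem_range.2 fun Z => neg_condMeanLog2_self_le hP hU hQ Z.2 le_rfl⟩ ⟨Z, hZ⟩

theorem exists_lt_lagrangian [Nonempty X] (hP : ∀ x, 0 ≤ P x) (hU : ∀ x y, 0 < U x y)
    (hQ : ∀ x y, 0 ≤ Q x y) {s : ℝ} (hs : maxCondEntropy P U Q < s) (hZ : Z ∈ channels Y X) :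
    ∃ θ ∈ Set.Ici (0 : ℝ),
      -s < condMeanLog2 (outputDist P Q) Z Z + θ * metricGap P U Q Z := by
  rcases le_or_gt (metricGap P U Q Z) 0 with hgap | hgap
  · have h := neg_condMeanLog2_self_le_maxCondEntropy hP hU hQ (mem_admissible_iff.2 ⟨hZ, hgap⟩)
    exact ⟨0, Set.self_mem_Ici, by linarith⟩
  · obtain ⟨n, hn⟩ := exists_lt_nsmul hgap (-s - condMeanLog2 (outputDist P Q) Z Z)
    rw [nsmul_eq_mul] at hn
    exact ⟨n, Set.mem_Ici.2 n.cast_nonneg, by linarith⟩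

theorem exists_neg_condMeanLog2_Utheta_lt [Nonempty X] (hP : ∀ x, 0 ≤ P x)
    (hU : ∀ x y, 0 < U x y) (hQ : ∀ x y, 0 ≤ Q x y) {s : ℝ} (hs : maxCondEntropy P U Q < s) :
    ∃ θ ∈ Set.Ici (0 : ℝ), -condMeanLog2 P Q (Utheta U θ) < s := by
  have hpow (θ : ℝ) (y : Y) (x : X) : U x y ^ θ ≠ 0 := (Real.rpow_pos_of_pos (hU x y) θ).ne'
  have hcontinuous (θ : ℝ) :
      Continuous fun Z => condMeanLog2 (outputDist P Q) Z Z + θ * metricGap P U Q Z := by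
    simp only [← condDiv2_rpow_add_mul_eq hU]
    exact (continuous_condDiv2 (hpow θ)).add_const _
  have hconvex (θ : ℝ) : ConvexOn ℝ (channels Y X)
      fun Z => condMeanLog2 (outputDist P Q) Z Z + θ * metricGap P U Q Z := by
    simp only [← condDiv2_rpow_add_mul_eq hU]
    exact (convexOn_condDiv2 (outputDist_nonneg hP hQ) (hpow θ)).add_const _
  have hconcave (Z : Y → X → ℝ) : ConcaveOn ℝ (Set.Ici 0)
      fun θ => condMeanLog2 (outputDist P Q) Z Z + θ * metricGap P U Q Z :=
    (concaveOn_const _ (convex_Ici 0)).add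
      ((LinearMap.mulRight ℝ (metricGap P U Q Z)).concaveOn (convex_Ici 0))
  obtain ⟨θ, hθ, hlt⟩ := exists_forall_lt_of_forall_exists_lt channels_nonempty isCompact_channels
    convex_channels (convex_Ici (0 : ℝ))
    (fun θ _ => (hcontinuous θ).lowerSemicontinuous.lowerSemicontinuousOn _)
    (fun θ _ => (hconvex θ).quasiconvexOn)
    (fun Z _ => Continuous.upperSemicontinuous (by fun_prop) |>.upperSemicontinuousOn _)
    (fun Z _ => (hconcave Z).quasiconcaveOn) fun Z hZ => exists_lt_lagrangian hP hU hQ hs hZ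
  obtain ⟨Z, hZ, heq⟩ := (isLeast_lagrangian hP hU hQ θ).1
  exact ⟨θ, hθ, neg_lt.1 (heq ▸ hlt Z hZ)⟩

theorem isGLB_maxCondEntropy [Nonempty X] (hP : ∀ x, 0 ≤ P x) (hU : ∀ x y, 0 < U x y)
    (hQ : ∀ x y, 0 ≤ Q x y) :
    IsGLB ((fun θ => -condMeanLog2 P Q (Utheta U θ)) '' Set.Ici 0) (maxCondEntropy P U Q) := by
  have := (admissible_nonempty hP hU hQ).to_subtype
  refine ⟨Set.forall_mem_image.2 fun θ hθ =>
    ciSup_le fun Z => neg_condMeanLog2_self_le hP hU hQ Z.2 hθ, fun s hs => ?_⟩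
  by_contra! hlt
  obtain ⟨θ, hθ, hθs⟩ := exists_neg_condMeanLog2_Utheta_lt hP hU hQ hlt
  exact (hs ⟨θ, hθ, rfl⟩).not_gt hθs

theorem saddleObjective_eq [Nonempty X] (hW : ∀ x y, W x y ≠ 0) (hU : ∀ x y, 0 < U x y)
    (r ρ θ : ℝ) (Q : X → Y → ℝ) :
    saddleObjective P W U r ρ θ Q =
      condDiv2 P Q (fun x y => W x y / Utheta U θ x y ^ ρ) + ρ * r := by
  have hpow (x : X) (y : Y) : Utheta U θ x y ^ ρ ≠ 0 :=
    (Real.rpow_pos_of_pos (Utheta_pos hU θ x y) ρ).ne'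
  rw [saddleObjective, condDiv2_eq_condMeanLog2_sub hW,
    condDiv2_eq_condMeanLog2_sub fun x y => div_ne_zero (hW x y) (hpow x y),
    condMeanLog2_div hW hpow, condMeanLog2_rpow (Utheta_pos hU θ)]
  ring

theorem isLeast_saddleObjective [Nonempty X] [Nonempty Y] (hP : ∀ x, 0 ≤ P x)
    (hW : ∀ x y, 0 < W x y) (hU : ∀ x y, 0 < U x y) (r ρ θ : ℝ) :
    IsLeast (saddleObjective P W U r ρ θ '' channels X Y) (dualObjective P W U r ρ θ) := by
  have h := (monotone_id.add_const (ρ * r)).map_isLeast <| isLeast_condDiv2_image_channels hP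
    fun x y => div_pos (hW x y) (Real.rpow_pos_of_pos (Utheta_pos hU θ x y) ρ)
  rw [Set.image_image] at h
  rwa [funext (saddleObjective_eq (fun x y => (hW x y).ne') hU r ρ θ)]

theorem continuous_saddleObjective [Nonempty X] (hW : ∀ x y, W x y ≠ 0) (hU : ∀ x y, 0 < U x y)
    (r ρ θ : ℝ) : Continuous (saddleObjective P W U r ρ θ) := by
  rw [funext (saddleObjective_eq hW hU r ρ θ)]
  exact (continuous_condDiv2 fun x y =>
    div_ne_zero (hW x y) (Real.rpow_pos_of_pos (Utheta_pos hU θ x y) ρ).ne').add_const _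

theorem convexOn_saddleObjective [Nonempty X] (hP : ∀ x, 0 ≤ P x) (hW : ∀ x y, W x y ≠ 0)
    (hU : ∀ x y, 0 < U x y) (r ρ θ : ℝ) :
    ConvexOn ℝ (channels X Y) (saddleObjective P W U r ρ θ) := by
  rw [funext (saddleObjective_eq hW hU r ρ θ)]
  exact (convexOn_condDiv2 hP fun x y =>
    div_ne_zero (hW x y) (Real.rpow_pos_of_pos (Utheta_pos hU θ x y) ρ).ne').add_const _

theorem isLeast_saddleObjective_div [Nonempty X] (hP : ∀ x, 0 ≤ P x) (hU : ∀ x y, 0 < U x y)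
    (hQ : ∀ x y, 0 ≤ Q x y) (r : ℝ) {ρ : ℝ} (hρ : 0 < ρ) (μ : ℝ) :
    IsLeast ((fun Z => condDiv2 P Q W +
        (ρ * (r + condMeanLog2 (outputDist P Q) Z Z) + μ * metricGap P U Q Z)) '' channels Y X)
      (saddleObjective P W U r ρ (μ / ρ) Q) := by
  have hmono : Monotone fun a => condDiv2 P Q W + ρ * (r + a) := fun a b hab => by
    dsimp only
    gcongr
  have h := hmono.map_isLeast (isLeast_lagrangian hP hU hQ (μ / ρ))
  rw [Set.image_image] at h
  have hcoordinates (Z : Y → X → ℝ) :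
      ρ * (r + (condMeanLog2 (outputDist P Q) Z Z + μ / ρ * metricGap P U Q Z)) =
        ρ * (r + condMeanLog2 (outputDist P Q) Z Z) + μ * metricGap P U Q Z := by
    field_simp
    ring
  simp only [hcoordinates] at h
  exact h

theorem concaveOn_const_add_fst_mul_add_snd_mul {A : Set (ℝ × ℝ)} (hA : Convex ℝ A) (a b d : ℝ) :
    ConcaveOn ℝ A fun p => a + (p.1 * b + p.2 * d) :=
  (concaveOn_const a hA).add
    ((LinearMap.coprod (LinearMap.mulRight ℝ b) (LinearMap.mulRight ℝ d)).concaveOn hA)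

theorem convex_Ioc_prod_Ici : Convex ℝ (Set.Ioc (0 : ℝ) 1 ×ˢ Set.Ici (0 : ℝ)) :=
  (convex_Ioc 0 1).prod (convex_Ici 0)

theorem concaveOn_saddleObjective_div [Nonempty X] (hP : ∀ x, 0 ≤ P x) (hU : ∀ x y, 0 < U x y)
    (hQ : ∀ x y, 0 ≤ Q x y) (r : ℝ) :
    ConcaveOn ℝ (Set.Ioc (0 : ℝ) 1 ×ˢ Set.Ici (0 : ℝ))
      fun p => saddleObjective P W U r p.1 (p.2 / p.1) Q :=
  concaveOn_of_isLeast_image convex_Ioc_prod_Ici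
    (fun _ _ => concaveOn_const_add_fst_mul_add_snd_mul convex_Ioc_prod_Ici _ _ _)
    fun p hp => isLeast_saddleObjective_div hP hU hQ r hp.1.1 p.2

theorem upperSemicontinuousOn_saddleObjective_div [Nonempty X] (hP : ∀ x, 0 ≤ P x)
    (hU : ∀ x y, 0 < U x y) (hQ : ∀ x y, 0 ≤ Q x y) (r : ℝ) :
    UpperSemicontinuousOn (fun p => saddleObjective P W U r p.1 (p.2 / p.1) Q)
      (Set.Ioc (0 : ℝ) 1 ×ˢ Set.Ici (0 : ℝ)) :=
  upperSemicontinuousOn_of_isLeast_image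
    (fun _ _ => Continuous.upperSemicontinuous (by fun_prop) |>.upperSemicontinuousOn _)
    fun p hp => isLeast_saddleObjective_div hP hU hQ r hp.1.1 p.2

theorem exists_lt_saddleObjective [Nonempty X] (hP : ∀ x, 0 ≤ P x) (hU : ∀ x y, 0 < U x y)
    (hQ : ∀ x y, 0 ≤ Q x y) {r t : ℝ} (ht : t < primalObjective P W U r Q) :
    ∃ ρ ∈ Set.Ioc (0 : ℝ) 1, ∃ θ ∈ Set.Ici (0 : ℝ), t < saddleObjective P W U r ρ θ Q := by
  obtain ⟨ρ, hρ, hlt⟩ := exists_mem_Ioc_lt_add_mul ht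
  have hmax : maxCondEntropy P U Q < r - (t - condDiv2 P Q W) / ρ := by
    rw [lt_sub_comm, div_lt_iff₀' hρ.1]
    linarith
  obtain ⟨_, ⟨θ, hθ, rfl⟩, hθlt⟩ := (isGLB_lt_iff (isGLB_maxCondEntropy hP hU hQ)).1 hmax
  refine ⟨ρ, hρ, θ, hθ, ?_⟩
  dsimp only at hθlt
  rw [lt_sub_comm, div_lt_iff₀' hρ.1, sub_neg_eq_add] at hθlt
  rw [saddleObjective]
  linarith

theorem dualObjective_le_primalObjective [Nonempty X] [Nonempty Y] (hP : ∀ x, 0 ≤ P x)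
    (hW : ∀ x y, 0 < W x y) (hU : ∀ x y, 0 < U x y) (hQ : Q ∈ channels X Y) (r : ℝ) {ρ θ : ℝ}
    (hρ : ρ ∈ Set.Icc (0 : ℝ) 1) (hθ : 0 ≤ θ) :
    dualObjective P W U r ρ θ ≤ primalObjective P W U r Q := by
  have hmax : maxCondEntropy P U Q ≤ -condMeanLog2 P Q (Utheta U θ) :=
    (isGLB_maxCondEntropy hP hU hQ.1).1 ⟨θ, hθ, rfl⟩
  calc dualObjective P W U r ρ θ ≤ condDiv2 P Q W + ρ * (r + condMeanLog2 P Q (Utheta U θ)) :=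
        (isLeast_saddleObjective hP hW hU r ρ θ).2 ⟨Q, hQ, rfl⟩
    _ ≤ condDiv2 P Q W + ρ * (r - maxCondEntropy P U Q) := by
        gcongr
        · exact hρ.1
        · linarith
    _ ≤ primalObjective P W U r Q := add_le_add_right (mul_le_max_zero hρ) _

theorem exists_lt_dualObjective [Nonempty X] [Nonempty Y] (hP : ∀ x, 0 ≤ P x)
    (hW : ∀ x y, 0 < W x y) (hU : ∀ x y, 0 < U x y) {r t : ℝ}
    (ht : ∀ Q ∈ channels X Y, t < primalObjective P W U r Q) :
    ∃ ρ ∈ Set.Icc (0 : ℝ) 1, ∃ θ ∈ Set.Ici (0 : ℝ), t < dualObjective P W U r ρ θ := by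
  have hW' (x : X) (y : Y) : W x y ≠ 0 := (hW x y).ne'
  have hpointwise : ∀ Q ∈ channels X Y, ∃ p ∈ Set.Ioc (0 : ℝ) 1 ×ˢ Set.Ici (0 : ℝ),
      t < saddleObjective P W U r p.1 (p.2 / p.1) Q := fun Q hQ => by
    obtain ⟨ρ, hρ, θ, hθ, hlt⟩ := exists_lt_saddleObjective hP hU hQ.1 (ht Q hQ)
    refine ⟨(ρ, ρ * θ), ⟨hρ, mul_nonneg hρ.1.le hθ⟩, ?_⟩
    rwa [mul_div_cancel_left₀ θ hρ.1.ne']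
  obtain ⟨⟨ρ, μ⟩, ⟨hρ, hμ⟩, hlt⟩ := exists_forall_lt_of_forall_exists_lt channels_nonempty
    isCompact_channels convex_channels convex_Ioc_prod_Ici
    (fun p _ => (continuous_saddleObjective hW' hU r p.1 (p.2 / p.1)).lowerSemicontinuous
      |>.lowerSemicontinuousOn _)
    (fun p _ => (convexOn_saddleObjective hP hW' hU r _ _).quasiconvexOn)
    (fun Q hQ => upperSemicontinuousOn_saddleObjective_div hP hU hQ.1 r)
    (fun Q hQ => (concaveOn_saddleObjective_div hP hU hQ.1 r).quasiconcaveOn) hpointwise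
  obtain ⟨Q, hQ, heq⟩ := (isLeast_saddleObjective hP hW hU r ρ (μ / ρ)).1
  exact ⟨ρ, Set.Ioc_subset_Icc_self hρ, μ / ρ, div_nonneg hμ hρ.1.le, heq ▸ hlt Q hQ⟩

theorem primal_dual_exponent_equality_general [Nonempty X] [Nonempty Y] (hP : ∀ x, 0 ≤ P x)
    (hW : ∀ x y, 0 < W x y) (hU : ∀ x y, 0 < U x y) (r : ℝ) :
    ⨅ Q : channels X Y, primalObjective P W U r Q.1 =
      ⨆ ρ : Set.Icc (0 : ℝ) 1, ⨆ θ : Set.Ici (0 : ℝ), dualObjective P W U r ρ.1 θ.1 := by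
  have := (channels_nonempty (I := X) (J := Y)).to_subtype
  refine ciInf_eq_ciSup_ciSup
    (fun Q ρ θ => dualObjective_le_primalObjective hP hW hU Q.2 r ρ.2 θ.2) fun t ht => ?_
  obtain ⟨ρ, hρ, θ, hθ, hlt⟩ := exists_lt_dualObjective hP hW hU fun Q hQ => ht ⟨Q, hQ⟩
  exact ⟨⟨ρ, hρ⟩, ⟨θ, hθ⟩, hlt⟩

end Duality

/-- Method-of-types (primal) form of the random coding exponent for linear
codes with codebook mismatch equals its Lagrange-dual (Gallager-style) form:
`min_Q { D(Q‖W|P_X) + [H(P_X) − R − max_{Q'∈E(Q)} H_Q(X'|Y)]_+ }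
  = max_{ρ∈[0,1]} sup_{θ≥0} { −Σ_x P_X(x) log₂( Σ_y W(y|x)/U_θ(x|y)^ρ ) + ρ(H(P_X) − R) }`,
where `E(Q)` is the set of conditional assignments `Q'(x|y)` with
`Σ_{x,y} Q_Y(y) Q'(x|y) log₂ U(x,y) ≥ Σ_{x,y} P_X(x)Q(y|x) log₂ U(x,y)` and
`Q_Y(y) = Σ_x P_X(x)Q(y|x)`. -/
theorem primal_dual_exponent_equality
    {X Y : Type*} [Fintype X] [Fintype Y] [Nonempty X] [Nonempty Y]
    (P : X → ℝ) (hP0 : ∀ x, 0 ≤ P x) (hP1 : ∑ x, P x = 1)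
    (W : X → Y → ℝ) (hW : ∀ x y, 0 < W x y) (hWsum : ∀ x, ∑ y, W x y = 1)
    (U : X → Y → ℝ) (hU : ∀ x y, 0 < U x y) (R : ℝ) :
    (⨅ Q : {Q : X → Y → ℝ // (∀ x y, 0 ≤ Q x y) ∧ ∀ x, ∑ y, Q x y = 1},
        condDiv2 P Q.1 W +
          max (entropy2 P - R -
            ⨆ Q' : {Q' : Y → X → ℝ //
                ((∀ y x, 0 ≤ Q' y x) ∧ ∀ y, ∑ x, Q' y x = 1) ∧
                (∑ x, ∑ y, P x * Q.1 x y * Real.logb 2 (U x y)) ≤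
                  ∑ y, (∑ x, P x * Q.1 x y) * ∑ x, Q' y x * Real.logb 2 (U x y)},
              -∑ y, (∑ x, P x * Q.1 x y) * ∑ x, Q'.1 y x * Real.logb 2 (Q'.1 y x)) 0) =
      ⨆ ρ : Set.Icc (0:ℝ) 1, ⨆ θ : Set.Ici (0:ℝ),
        (-∑ x, P x * Real.logb 2 (∑ y, W x y / Utheta U θ.1 x y ^ (ρ.1 : ℝ))
          + ρ.1 * (entropy2 P - R)) :=
  primal_dual_exponent_equality_general hP0 hW hU (entropy2 P - R)
end

section
/- Let (Ω, ℱ, P) be a probability space, N ≥ 2 an integer, and A_1, …, A_N events such that P(A_i) = α for every i and P(A_i ∩ A_j) = α² for all i ≠ j, where 0 ≤ α ≤ 1. Then P(A_1 ∪ ⋯ ∪ A_N) ≥ Nα / (1 + (N−1)α) ≥ min{ 1/2, (N−1)α/2 }. -/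
open MeasureTheory

/-!
Give each event `A i` a weight `c i`. At a point lying in exactly `d ≥ 1` of the events, each of
those events has `2 * c i - c i ^ 2 * d ≤ 1 / d`, and these `d` upper bounds add up to `1`.
Integrating bounds `μ (⋃ i, A i)` from below by a concave quadratic function of the weights, and
maximising over each weight separately gives de Caen's inequality.
-/

theorem two_mul_sub_sq_mul_le_inv (c : ℝ) {d : ℝ} (hd : 0 < d) : 2 * c - c ^ 2 * d ≤ d⁻¹ := by
  have h_sq : d⁻¹ - (2 * c - c ^ 2 * d) = (1 - c * d) ^ 2 / d := by
    field_simp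
    ring
  exact sub_nonneg.mp (h_sq ▸ by positivity)

theorem min_half_le_div_one_add {x : ℝ} (hx : 0 ≤ x) : min (1 / 2) (x / 2) ≤ x / (1 + x) := by
  rcases le_total x 1 with h | h
  · calc min (1 / 2) (x / 2) ≤ x / 2 := min_le_right _ _
      _ ≤ x / (1 + x) := div_le_div_of_nonneg_left hx (by linarith) (by linarith)
  · calc min (1 / 2) (x / 2) ≤ 1 / 2 := min_le_left _ _
      _ ≤ x / (1 + x) := by
        rw [div_le_div_iff₀ two_pos (by linarith)]
        linarith

section DeCaen

variable {Ω ι : Type*} [Fintype ι]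

theorem sum_indicator_sub_le_indicator_iUnion (A : ι → Set Ω) (c : ι → ℝ) (ω : Ω) :
    ∑ i, (2 * c i * (A i).indicator 1 ω - c i ^ 2 * ∑ j, (A i ∩ A j).indicator 1 ω) ≤
      (⋃ i, A i).indicator 1 ω := by
  set d : ℝ := ∑ i, (A i).indicator 1 ω
  have h_inter (i : ι) : ∑ j, (A i ∩ A j).indicator (1 : Ω → ℝ) ω = (A i).indicator 1 ω * d := by
    simp only [Set.inter_indicator_one, Pi.mul_apply, ← Finset.mul_sum, d]
  have h_nonneg (i : ι) : 0 ≤ (A i).indicator (1 : Ω → ℝ) ω :=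
    Set.indicator_nonneg (fun _ _ => zero_le_one) ω
  by_cases hω : ω ∈ ⋃ i, A i
  · obtain ⟨k, hk⟩ := Set.mem_iUnion.mp hω
    have hd : 0 < d := Finset.sum_pos' (fun i _ => h_nonneg i) ⟨k, Finset.mem_univ k, by simp [hk]⟩
    calc ∑ i, (2 * c i * (A i).indicator 1 ω - c i ^ 2 * ∑ j, (A i ∩ A j).indicator 1 ω)
        = ∑ i, (A i).indicator 1 ω * (2 * c i - c i ^ 2 * d) :=
          Finset.sum_congr rfl fun i _ => by rw [h_inter]; ring
      _ ≤ ∑ i, (A i).indicator 1 ω * d⁻¹ := Finset.sum_le_sum fun i _ =>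
          mul_le_mul_of_nonneg_left (two_mul_sub_sq_mul_le_inv (c i) hd) (h_nonneg i)
      _ = 1 := by rw [← Finset.sum_mul, mul_inv_cancel₀ hd.ne']
      _ = (⋃ i, A i).indicator 1 ω := by rw [Set.indicator_of_mem hω, Pi.one_apply]
  · have h_zero (i : ι) : (A i).indicator (1 : Ω → ℝ) ω = 0 :=
      Set.indicator_of_notMem (fun hi => hω (Set.mem_iUnion_of_mem i hi)) 1
    simp [h_inter, h_zero, hω]

variable [MeasurableSpace Ω] {μ : Measure Ω} {A : ι → Set Ω}

theorem integrable_indicator_one₀ {s : Set Ω} (hs : NullMeasurableSet s μ) (hμs : μ s ≠ ⊤) :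
    Integrable (s.indicator (1 : Ω → ℝ)) μ :=
  (integrableOn_const hμs).integrable_indicator₀ hs

theorem integral_indicator_one₀ {s : Set Ω} (hs : NullMeasurableSet s μ) :
    ∫ ω, s.indicator (1 : Ω → ℝ) ω ∂μ = μ.real s := by
  simp [integral_indicator₀ hs]

theorem sum_measureReal_sub_le_measureReal_iUnion (hA : ∀ i, NullMeasurableSet (A i) μ)
    (hfin : ∀ i, μ (A i) ≠ ⊤) (c : ι → ℝ) :
    ∑ i, (2 * c i * μ.real (A i) - c i ^ 2 * ∑ j, μ.real (A i ∩ A j)) ≤ μ.real (⋃ i, A i) := by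
  have h_single (i : ι) : Integrable (fun ω => 2 * c i * (A i).indicator 1 ω) μ :=
    (integrable_indicator_one₀ (hA i) (hfin i)).const_mul _
  have h_inter (i j : ι) : Integrable (fun ω => (A i ∩ A j).indicator (1 : Ω → ℝ) ω) μ :=
    integrable_indicator_one₀ ((hA i).inter (hA j)) (measure_inter_ne_top_of_left_ne_top (hfin i))
  have h_pair (i : ι) : Integrable (fun ω => c i ^ 2 * ∑ j, (A i ∩ A j).indicator 1 ω) μ :=
    (integrable_finsetSum _ fun j _ => h_inter i j).const_mul _
  have h_term (i : ι) : Integrable (fun ω =>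
      2 * c i * (A i).indicator 1 ω - c i ^ 2 * ∑ j, (A i ∩ A j).indicator 1 ω) μ :=
    (h_single i).sub (h_pair i)
  have h_union : NullMeasurableSet (⋃ i, A i) μ := .iUnion hA
  have h_union_fin : μ (⋃ i, A i) ≠ ⊤ := by
    simpa using measure_biUnion_ne_top Set.finite_univ fun i _ => hfin i
  calc ∑ i, (2 * c i * μ.real (A i) - c i ^ 2 * ∑ j, μ.real (A i ∩ A j))
      = ∫ ω, ∑ i,
          (2 * c i * (A i).indicator 1 ω - c i ^ 2 * ∑ j, (A i ∩ A j).indicator 1 ω) ∂μ := by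
        rw [integral_finsetSum _ fun i _ => h_term i]
        refine Finset.sum_congr rfl fun i _ => ?_
        rw [integral_sub (h_single i) (h_pair i), integral_const_mul, integral_const_mul,
          integral_finsetSum _ fun j _ => h_inter i j, integral_indicator_one₀ (hA i)]
        simp only [integral_indicator_one₀ ((hA i).inter (hA _))]
    _ ≤ ∫ ω, (⋃ i, A i).indicator 1 ω ∂μ :=
        integral_mono (integrable_finsetSum _ fun i _ => h_term i)
          (integrable_indicator_one₀ h_union h_union_fin)
          (sum_indicator_sub_le_indicator_iUnion A c)
    _ = μ.real (⋃ i, A i) := integral_indicator_one₀ h_union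

/-- **de Caen's inequality**. A null set `A i` contributes `0 / 0 = 0`. -/
theorem sum_sq_div_sum_inter_le_measureReal_iUnion (hA : ∀ i, NullMeasurableSet (A i) μ)
    (hfin : ∀ i, μ (A i) ≠ ⊤) :
    ∑ i, μ.real (A i) ^ 2 / ∑ j, μ.real (A i ∩ A j) ≤ μ.real (⋃ i, A i) := by
  refine le_trans (Finset.sum_le_sum fun i _ => ?_) (sum_measureReal_sub_le_measureReal_iUnion
    hA hfin fun i => μ.real (A i) / ∑ j, μ.real (A i ∩ A j))
  rcases eq_or_ne (∑ j, μ.real (A i ∩ A j)) 0 with h | h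
  · simp [h]
  · refine le_of_eq ?_
    field_simp
    ring

theorem sum_measureReal_inter_le {β : ℝ} {i : ι}
    (hpair : ∀ j, i ≠ j → μ.real (A i ∩ A j) ≤ β) :
    ∑ j, μ.real (A i ∩ A j) ≤ μ.real (A i) + ((Fintype.card ι : ℝ) - 1) * β := by
  classical
  have h_card : ((Finset.univ.erase i).card : ℝ) = Fintype.card ι - 1 :=
    Finset.cast_card_erase_of_mem (Finset.mem_univ i)
  rw [← Finset.add_sum_erase _ _ (Finset.mem_univ i), Set.inter_self, ← h_card, ← nsmul_eq_mul]
  gcongr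
  exact Finset.sum_le_card_nsmul _ _ _ fun j hj => hpair j (Finset.ne_of_mem_erase hj).symm

theorem card_mul_sq_div_le_measureReal_iUnion (hA : ∀ i, NullMeasurableSet (A i) μ)
    (hfin : ∀ i, μ (A i) ≠ ⊤) {α β : ℝ} (hsingle : ∀ i, μ.real (A i) = α)
    (hpair : ∀ i j, i ≠ j → μ.real (A i ∩ A j) ≤ β) :
    Fintype.card ι * (α ^ 2 / (α + ((Fintype.card ι : ℝ) - 1) * β)) ≤ μ.real (⋃ i, A i) := by
  rw [← nsmul_eq_mul]
  refine (Finset.card_nsmul_le_sum _ _ _ fun i _ => ?_).trans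
    (sum_sq_div_sum_inter_le_measureReal_iUnion hA hfin)
  rw [hsingle i]
  have h_sum : ∑ j, μ.real (A i ∩ A j) ≤ α + ((Fintype.card ι : ℝ) - 1) * β :=
    hsingle i ▸ sum_measureReal_inter_le (hpair i)
  rcases eq_or_ne α 0 with rfl | hα
  · simp
  · have h_diag : α ≤ ∑ j, μ.real (A i ∩ A j) := by
      simpa [hsingle i] using Finset.single_le_sum (f := fun j => μ.real (A i ∩ A j))
        (fun _ _ => measureReal_nonneg) (Finset.mem_univ i)
    have hα_pos : 0 < α := (hsingle i ▸ measureReal_nonneg).lt_of_ne' hα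
    exact div_le_div_of_nonneg_left (sq_nonneg α) (hα_pos.trans_le h_diag) h_sum

theorem deCaen_union_lower_bound_general [Nonempty ι] (hA : ∀ i, NullMeasurableSet (A i) μ)
    {α : ℝ} (hα : 0 ≤ α) (hsingle : ∀ i, μ (A i) = ENNReal.ofReal α)
    (hpair : ∀ i j, i ≠ j → μ (A i ∩ A j) ≤ ENNReal.ofReal (α ^ 2)) :
    ENNReal.ofReal (Fintype.card ι * α / (1 + ((Fintype.card ι : ℝ) - 1) * α)) ≤ μ (⋃ i, A i) ∧
    ENNReal.ofReal (min (1 / 2) (((Fintype.card ι : ℝ) - 1) * α / 2)) ≤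
      ENNReal.ofReal (Fintype.card ι * α / (1 + ((Fintype.card ι : ℝ) - 1) * α)) := by
  have h_card : (1 : ℝ) ≤ Fintype.card ι := mod_cast Fintype.card_pos
  have hx : 0 ≤ ((Fintype.card ι : ℝ) - 1) * α := mul_nonneg (sub_nonneg.mpr h_card) hα
  refine ⟨ENNReal.ofReal_le_of_le_toReal ?_, ENNReal.ofReal_le_ofReal ?_⟩
  · have h_single (i : ι) : μ.real (A i) = α := by
      rw [Measure.real, hsingle, ENNReal.toReal_ofReal hα]
    have h_pair (i j : ι) (hij : i ≠ j) : μ.real (A i ∩ A j) ≤ α ^ 2 :=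
      ENNReal.toReal_le_of_le_ofReal (sq_nonneg α) (hpair i j hij)
    calc Fintype.card ι * α / (1 + ((Fintype.card ι : ℝ) - 1) * α)
        = Fintype.card ι * (α ^ 2 / (α + ((Fintype.card ι : ℝ) - 1) * α ^ 2)) := by
          rcases eq_or_ne α 0 with rfl | hα_ne
          · simp
          · field_simp
      _ ≤ μ.real (⋃ i, A i) := card_mul_sq_div_le_measureReal_iUnion hA
          (fun i => hsingle i ▸ ENNReal.ofReal_ne_top) h_single h_pair
  · refine (min_half_le_div_one_add hx).trans ?_
    gcongr
    exact sub_le_self _ zero_le_one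

end DeCaen

/-- de Caen-type lower bound on the probability of a union of `N ≥ 2` events,
each of probability `α`, with pairwise intersections of probability `α²`:
`P(∪ A_i) ≥ Nα/(1+(N−1)α) ≥ min{1/2, (N−1)α/2}`. -/
theorem deCaen_union_lower_bound
    {Ω : Type*} [MeasurableSpace Ω] (μ : Measure Ω) [IsProbabilityMeasure μ]
    (N : ℕ) (hN : 2 ≤ N) (A : Fin N → Set Ω) (hA : ∀ i, MeasurableSet (A i))
    (α : ℝ) (hα0 : 0 ≤ α) (hα1 : α ≤ 1)
    (hsingle : ∀ i, μ (A i) = ENNReal.ofReal α)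
    (hpair : ∀ i j, i ≠ j → μ (A i ∩ A j) = ENNReal.ofReal (α ^ 2)) :
    ENNReal.ofReal ((N : ℝ) * α / (1 + ((N : ℝ) - 1) * α)) ≤ μ (⋃ i, A i) ∧
    ENNReal.ofReal (min (1 / 2) (((N : ℝ) - 1) * α / 2)) ≤
      ENNReal.ofReal ((N : ℝ) * α / (1 + ((N : ℝ) - 1) * α)) := by
  have : Nonempty (Fin N) := ⟨⟨0, by lia⟩⟩
  simpa only [Fintype.card_fin] using deCaen_union_lower_bound_general
    (fun i => (hA i).nullMeasurableSet) hα0 hsingle fun i j hij => (hpair i j hij).le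
end

section
/- Let X and Y be finite nonempty alphabets with |X| = 2^m, φ : GF(2)^m → X a bijection extended componentwise to Φ : GF(2)^{nm} → X^n, and U : X×Y → (0,∞) a decoding metric, with U(x⃗,y⃗) = ∏_{i=1}^n U(x_i, y_i) for x⃗ ∈ X^n, y⃗ ∈ Y^n. Let k ≤ nm be a positive integer, let G be uniform on the k×(nm) matrices over GF(2) and v uniform on GF(2)^{nm}, independent, and set c(w) = wG + v for w ∈ GF(2)^k. Fix a message w, a binary vector c₀ ∈ GF(2)^{nm} with x⃗ = Φ(c₀), and y⃗ ∈ Y^n, and let α = |{ x⃗' ∈ X^n : U(x⃗', y⃗) ≥ U(x⃗, y⃗) }| · 2^{−nm}. Then the conditional probability P̄ = Pr( ∃ w' ≠ w : U(Φ(c(w')), y⃗) ≥ U(x⃗, y⃗) | c(w) = c₀ ) satisfies min{ 1/2, (2^k − 2)α/2 } ≤ P̄ ≤ min{ 1, (2^k − 1)α }. -/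
/-!
Over `GF(2)` three distinct messages are affinely independent, so the codewords `c(w)`, `c(w₁)`,
`c(w₂)` are independent and uniform. Hence, given `c(w) = c₀`, the events that a competing
codeword scores at least as high as `x⃗` are pairwise independent of probability `α` each; let
`s = (2^k − 1)α` be the sum of their probabilities. The union bound is the upper estimate. For the
lower one, the Chung–Erdős inequality gives the union probability at least
`s² / (s + s²) = s / (1 + s) ≥ min(1, s) / 2`.
-/

open MeasureTheory ProbabilityTheory Set Function
open scoped Matrix

section PairwiseIndependentEvents

variable {Ω ι : Type*} [MeasurableSpace Ω] {μ : Measure Ω} [Fintype ι] {A : ι → Set Ω}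

theorem sum_sum_measureReal_inter_le_of_pairwise_indepSet
    (hindep : Pairwise fun i j => IndepSet (A i) (A j) μ) :
    ∑ i, ∑ j, μ.real (A i ∩ A j) ≤ (∑ i, μ.real (A i)) * (1 + ∑ i, μ.real (A i)) := by
  classical
  have inter_le (i j : ι) : μ.real (A i ∩ A j) ≤
      (if i = j then μ.real (A i) else 0) + μ.real (A i) * μ.real (A j) := by
    split_ifs with h
    · rw [← h, inter_self]
      exact le_add_of_nonneg_right (mul_self_nonneg _)
    · simp only [measureReal_def, (hindep h).measure_inter_eq_mul, ENNReal.toReal_mul, zero_add,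
        le_refl]
  calc ∑ i, ∑ j, μ.real (A i ∩ A j)
      ≤ ∑ i, ∑ j, ((if i = j then μ.real (A i) else 0) + μ.real (A i) * μ.real (A j)) :=
        Finset.sum_le_sum fun i _ => Finset.sum_le_sum fun j _ => inter_le i j
    _ = (∑ i, μ.real (A i)) * (1 + ∑ i, μ.real (A i)) := by
        simp [Finset.sum_add_distrib, ← Finset.mul_sum, ← Finset.sum_mul, mul_add]

variable [IsFiniteMeasure μ]

theorem sq_integral_le_measureReal_mul_integral_sq {f : Ω → ℝ} {S : Set Ω} (hf : MemLp f 2 μ)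
    (hS : MeasurableSet S) (hfS : support f ⊆ S) :
    (∫ ω, f ω ∂μ) ^ 2 ≤ μ.real S * ∫ ω, f ω ^ 2 ∂μ := by
  have expand (t : ℝ) (ω : Ω) : (t * f ω - S.indicator 1 ω) ^ 2 =
      t ^ 2 * f ω ^ 2 - 2 * t * f ω + S.indicator 1 ω := by
    by_cases h : ω ∈ S
    · simp only [indicator_of_mem h, Pi.one_apply]
      ring
    · simp [indicator_of_notMem h, notMem_support.1 fun hω => h (hfS hω)]
  have quadratic_nonneg (t : ℝ) :
      0 ≤ (∫ ω, f ω ^ 2 ∂μ) * (t * t) + -(2 * ∫ ω, f ω ∂μ) * t + μ.real S := by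
    have hf₁ := (hf.integrable one_le_two).const_mul (2 * t)
    have hf₂ := hf.integrable_sq.const_mul (t ^ 2)
    have hind : Integrable (S.indicator (1 : Ω → ℝ)) μ := (integrable_const 1).indicator hS
    calc 0 ≤ ∫ ω, (t * f ω - S.indicator 1 ω) ^ 2 ∂μ := integral_nonneg fun ω => sq_nonneg _
      _ = t ^ 2 * ∫ ω, f ω ^ 2 ∂μ - 2 * t * ∫ ω, f ω ∂μ + μ.real S := by
          simp_rw [expand]
          rw [integral_add (f := fun ω => _ - _) (hf₂.sub hf₁) hind, integral_sub hf₂ hf₁,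
            integral_const_mul, integral_const_mul, integral_indicator_one hS]
      _ = _ := by ring
  have := discrim_le_zero quadratic_nonneg
  rw [discrim] at this
  linarith

theorem sq_sum_measureReal_le_measureReal_iUnion_mul (hA : ∀ i, MeasurableSet (A i)) :
    (∑ i, μ.real (A i)) ^ 2 ≤ μ.real (⋃ i, A i) * ∑ i, ∑ j, μ.real (A i ∩ A j) := by
  let Z : Ω → ℝ := fun ω => ∑ i, (A i).indicator 1 ω
  have integral_Z : ∫ ω, Z ω ∂μ = ∑ i, μ.real (A i) := by
    have hint (i : ι) : Integrable ((A i).indicator (1 : Ω → ℝ)) μ :=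
      (integrable_const 1).indicator (hA i)
    simp only [Z, integral_finsetSum _ fun i _ => hint i, integral_indicator_one (hA _)]
  have integral_Z_sq : ∫ ω, Z ω ^ 2 ∂μ = ∑ i, ∑ j, μ.real (A i ∩ A j) := by
    have hint (i j : ι) : Integrable ((A i ∩ A j).indicator (1 : Ω → ℝ)) μ :=
      (integrable_const 1).indicator ((hA i).inter (hA j))
    have Z_sq (ω : Ω) : Z ω ^ 2 = ∑ i, ∑ j, (A i ∩ A j).indicator 1 ω := by
      simp only [Z, sq, Finset.sum_mul_sum, inter_indicator_one, Pi.mul_apply]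
    simp only [Z_sq, integral_finsetSum _ fun i _ => integrable_finsetSum _ fun j _ => hint i j,
      integral_finsetSum _ fun j _ => hint _ j, integral_indicator_one ((hA _).inter (hA _))]
  have memLp_Z : MemLp Z 2 μ :=
    memLp_finsetSum _ fun i _ => (memLp_const 1).indicator (hA i)
  have support_Z : support Z ⊆ ⋃ i, A i := fun ω hω => by
    obtain ⟨i, -, hi⟩ := Finset.exists_ne_zero_of_sum_ne_zero hω
    exact mem_iUnion_of_mem i (mem_of_indicator_ne_zero hi)
  simpa only [integral_Z, integral_Z_sq] using
    sq_integral_le_measureReal_mul_integral_sq memLp_Z (.iUnion hA) support_Z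

theorem sum_measureReal_le_measureReal_iUnion_mul_one_add_sum (hA : ∀ i, MeasurableSet (A i))
    (hindep : Pairwise fun i j => IndepSet (A i) (A j) μ) :
    ∑ i, μ.real (A i) ≤ μ.real (⋃ i, A i) * (1 + ∑ i, μ.real (A i)) := by
  set s := ∑ i, μ.real (A i)
  have hs_nonneg : 0 ≤ s := Finset.sum_nonneg fun i _ => measureReal_nonneg
  rcases hs_nonneg.eq_or_lt with hs_zero | hs_pos
  · simp [← hs_zero, measureReal_nonneg]
  · refine le_of_mul_le_mul_left ?_ hs_pos
    calc s * s = s ^ 2 := (sq s).symm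
      _ ≤ μ.real (⋃ i, A i) * ∑ i, ∑ j, μ.real (A i ∩ A j) :=
          sq_sum_measureReal_le_measureReal_iUnion_mul hA
      _ ≤ μ.real (⋃ i, A i) * (s * (1 + s)) := by
          gcongr
          exact sum_sum_measureReal_inter_le_of_pairwise_indepSet hindep
      _ = s * (μ.real (⋃ i, A i) * (1 + s)) := by ring

theorem min_half_half_sum_measureReal_le_measureReal_iUnion (hA : ∀ i, MeasurableSet (A i))
    (hindep : Pairwise fun i j => IndepSet (A i) (A j) μ) :
    min (1 / 2) ((∑ i, μ.real (A i)) / 2) ≤ μ.real (⋃ i, A i) := by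
  have sum_le := sum_measureReal_le_measureReal_iUnion_mul_one_add_sum hA hindep
  have union_nonneg : 0 ≤ μ.real (⋃ i, A i) := measureReal_nonneg
  rw [min_le_iff]
  rcases le_total 1 (∑ i, μ.real (A i)) with one_le_sum | sum_le_one
  · left; nlinarith
  · right; nlinarith

end PairwiseIndependentEvents

section UniformFibers

theorem uniformOn_real_apply {Ω : Type*} [MeasurableSpace Ω] [MeasurableSingletonClass Ω]
    [Finite Ω] (s t : Set Ω) : (uniformOn s).real t = (s ∩ t).ncard / s.ncard := by
  rw [measureReal_def, uniformOn, cond_apply s.toFinite.measurableSet,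
    Measure.count_apply (s ∩ t).toFinite.measurableSet,
    Measure.count_apply s.toFinite.measurableSet, ← s.toFinite.cast_ncard_eq,
    ← (s ∩ t).toFinite.cast_ncard_eq, ENNReal.toReal_mul, ENNReal.toReal_inv, div_eq_inv_mul]
  rfl

variable {G H H' : Type*} [AddGroup G] [AddGroup H] [AddGroup H']

theorem ncard_preimage_eq_ncard_mul_card_ker {f : G →+ H} (hf : Surjective f) (T : Set H) :
    (f ⁻¹' T).ncard = T.ncard * Nat.card f.ker :=
  calc (f ⁻¹' T).ncard = Nat.card (Σ t : T, f ⁻¹' {t.1}) :=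
        Nat.card_congr (Equiv.sigmaSubtypeFiberEquivSubtype f fun _ => Iff.rfl).symm
    _ = Nat.card (T × f.ker) := Nat.card_congr <|
        (Equiv.sigmaCongrRight fun t : T => f.fiberEquivKerOfSurjective hf t.1).trans
          (Equiv.sigmaEquivProd _ _)
    _ = T.ncard * Nat.card f.ker := Nat.card_prod _ _

theorem uniformOn_fiber_real_preimage [Finite G] [MeasurableSpace G] [MeasurableSingletonClass G]
    {f : G →+ H} {g : G →+ H'} (hfg : Surjective (f.prod g)) (c : H) (T : Set H') :
    (uniformOn (f ⁻¹' {c})).real (g ⁻¹' T) = T.ncard / Nat.card H' := by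
  have card_fiber_inter (T : Set H') :
      (f ⁻¹' {c} ∩ g ⁻¹' T).ncard = T.ncard * Nat.card (f.prod g).ker :=
    calc (f ⁻¹' {c} ∩ g ⁻¹' T).ncard = (f.prod g ⁻¹' ({c} ×ˢ T)).ncard := rfl
      _ = T.ncard * Nat.card (f.prod g).ker := by
          rw [ncard_preimage_eq_ncard_mul_card_ker hfg, ncard_prod, ncard_singleton, one_mul]
  have card_fiber : (f ⁻¹' {c}).ncard = Nat.card H' * Nat.card (f.prod g).ker := by
    simpa using card_fiber_inter univ
  rw [uniformOn_real_apply, card_fiber_inter, card_fiber, Nat.cast_mul, Nat.cast_mul]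
  exact mul_div_mul_right _ _ (Nat.cast_ne_zero.2 Nat.card_pos.ne')

end UniformFibers

section AffineExtension

variable {K V V' σ : Type*} [DivisionRing K] [AddCommGroup V] [Module K V] [AddCommGroup V']
  [Module K V']

theorem exists_linearMap_apply_eq_of_linearIndependent {v : σ → V} (hv : LinearIndependent K v)
    (z : σ → V') : ∃ f : V →ₗ[K] V', ∀ i, f (v i) = z i := by
  obtain ⟨g, hg⟩ := (Finsupp.linearCombination K v).exists_leftInverse_of_injective
    (LinearMap.ker_eq_bot.2 hv)
  refine ⟨Finsupp.linearCombination K z ∘ₗ g, fun i => ?_⟩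
  have hgv : g (v i) = Finsupp.single i 1 := by simpa using LinearMap.congr_fun hg (.single i 1)
  simp [hgv]

theorem exists_affineMap_apply_eq_of_affineIndependent {u : σ → V} (hu : AffineIndependent K u)
    (z : σ → V') : ∃ f : V →ᵃ[K] V', ∀ i, f (u i) = z i := by
  rcases isEmpty_or_nonempty σ with _ | ⟨⟨i₀⟩⟩
  · exact ⟨0, isEmptyElim⟩
  obtain ⟨L, hL⟩ := exists_linearMap_apply_eq_of_linearIndependent
    ((affineIndependent_iff_linearIndependent_vsub K u i₀).1 hu) fun i => z i - z i₀
  refine ⟨L.toAffineMap + AffineMap.const K V (z i₀ - L (u i₀)), fun i => ?_⟩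
  have hLi : L (u i) - L (u i₀) = z i - z i₀ := by
    rcases eq_or_ne i i₀ with rfl | hi
    · simp
    · simpa using hL ⟨i, hi⟩
  calc L (u i) + (z i₀ - L (u i₀)) = (L (u i) - L (u i₀)) + z i₀ := by abel
    _ = z i := by rw [hLi, sub_add_cancel]

theorem affineIndependent_triple_of_ne_zmod_two [Module (ZMod 2) V] {p q r : V} (hpq : p ≠ q)
    (hpr : p ≠ r) (hqr : q ≠ r) : AffineIndependent (ZMod 2) ![p, q, r] := by
  rw [affineIndependent_iff_not_collinear_set, collinear_iff_of_mem (mem_insert p _)]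
  rintro ⟨v, hv⟩
  have eq_vadd {x : V} (hx : x ∈ ({p, q, r} : Set V)) (hpx : p ≠ x) : x = v +ᵥ p := by
    obtain ⟨a, rfl⟩ := hv x hx
    have ha : a = 1 := Fin.eq_one_of_ne_zero a fun ha => hpx <| by
      rw [show a = 0 from ha, zero_smul, zero_vadd]
    rw [ha, one_smul]
  exact hqr <| (eq_vadd (by simp) hpq).trans (eq_vadd (by simp) hpr).symm

end AffineExtension

section RandomCode

variable {K ι J : Type*} [DivisionRing K] [Fintype ι]

/-- The codeword `wG + v` of the message `w`, as an additive function of the pair `(G, v)` that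
defines the code, so that joint distributions of codewords are images of the uniform distribution
under group homomorphisms. -/
def codeword (w : ι → K) : Matrix ι J K × (J → K) →+ (J → K) where
  toFun ω := w ᵥ* ω.1 + ω.2
  map_zero' := by simp
  map_add' ω ω' := by
    simp only [Prod.fst_add, Prod.snd_add, Matrix.vecMul_add]
    exact add_add_add_comm _ _ _ _

theorem surjective_pi_codeword {σ : Type*} {u : σ → ι → K} (hu : AffineIndependent K u) :
    Surjective fun (ω : Matrix ι J K × (J → K)) i => codeword (u i) ω := by
  classical
  intro z
  obtain ⟨f, hf⟩ := exists_affineMap_apply_eq_of_affineIndependent hu z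
  refine ⟨(f.linear.toMatrixRight', f 0), funext fun i => ?_⟩
  calc u i ᵥ* f.linear.toMatrixRight' + f 0 = f.linear (u i) + f 0 := by
        rw [← Matrix.toLinearMapRight'_apply, LinearEquiv.symm_apply_apply]
    _ = f (u i) := (congr_fun f.decomp (u i)).symm
    _ = z i := hf i

local instance : MeasurableSpace (Matrix ι J K × (J → K)) := ⊤

variable [Finite K] [Finite J]

theorem uniformOn_codeword_real_preimage {w w' : ι → K} (hw : w ≠ w') (c : J → K)
    (S : Set (J → K)) :
    (uniformOn (codeword w ⁻¹' {c})).real (codeword w' ⁻¹' S) =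
      S.ncard / Nat.card (J → K) := by
  refine uniformOn_fiber_real_preimage (fun z => ?_) c S
  obtain ⟨ω, hω⟩ := surjective_pi_codeword (affineIndependent_of_ne K hw) ![z.1, z.2]
  exact ⟨ω, Prod.ext (congr_fun hω 0) (congr_fun hω 1)⟩

theorem indepSet_preimage_codeword {w w₁ w₂ : ι → K} (h : AffineIndependent K ![w, w₁, w₂])
    (c : J → K) (S T : Set (J → K)) :
    IndepSet (codeword w₁ ⁻¹' S) (codeword w₂ ⁻¹' T) (uniformOn (codeword w ⁻¹' {c})) := by
  have joint : (uniformOn (codeword w ⁻¹' {c})).real (codeword w₁ ⁻¹' S ∩ codeword w₂ ⁻¹' T) =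
      (S ×ˢ T).ncard / Nat.card ((J → K) × (J → K)) := by
    refine uniformOn_fiber_real_preimage (g := (codeword w₁).prod (codeword w₂))
      (fun z => ?_) c (S ×ˢ T)
    obtain ⟨ω, hω⟩ := surjective_pi_codeword h ![z.1, z.2.1, z.2.2]
    exact ⟨ω, Prod.ext (congr_fun hω 0) (Prod.ext (congr_fun hω 1) (congr_fun hω 2))⟩
  have hw₁ : w ≠ w₁ := h.injective.ne (a₁ := 0) (a₂ := 1) (by decide)
  have hw₂ : w ≠ w₂ := h.injective.ne (a₁ := 0) (a₂ := 2) (by decide)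
  rw [indepSet_iff_measure_inter_eq_mul .of_discrete .of_discrete _,
    ← ENNReal.toReal_eq_toReal_iff' (by finiteness) (by finiteness), ENNReal.toReal_mul]
  simp only [← measureReal_def]
  rw [joint, uniformOn_codeword_real_preimage hw₁, uniformOn_codeword_real_preimage hw₂,
    ncard_prod, Nat.card_prod, Nat.cast_mul, Nat.cast_mul, mul_div_mul_comm]

theorem truncated_union_bound_tight_general {𝒳 : Type*}
    {Φ : (J → ZMod 2) → 𝒳} (hΦ : Bijective Φ) (D : Set 𝒳) (w : ι → ZMod 2) (c₀ : J → ZMod 2)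
    {α : ℝ} (hα : α = (Nat.card D : ℝ) / 2 ^ Nat.card J)
    {Pbar : ℝ}
    (hPbar : Pbar =
      (Nat.card {ω : Matrix ι J (ZMod 2) × (J → ZMod 2) //
          (∃ w', w' ≠ w ∧ Φ (w' ᵥ* ω.1 + ω.2) ∈ D) ∧ w ᵥ* ω.1 + ω.2 = c₀} : ℝ) /
      (Nat.card {ω : Matrix ι J (ZMod 2) × (J → ZMod 2) // w ᵥ* ω.1 + ω.2 = c₀} : ℝ)) :
    min (1 / 2) (((2 : ℝ) ^ Fintype.card ι - 1) * α / 2) ≤ Pbar ∧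
      Pbar ≤ min 1 (((2 : ℝ) ^ Fintype.card ι - 1) * α) := by
  classical
  let μ : Measure (Matrix ι J (ZMod 2) × (J → ZMod 2)) := uniformOn (codeword w ⁻¹' {c₀})
  let A (w' : {w' // w' ≠ w}) : Set (Matrix ι J (ZMod 2) × (J → ZMod 2)) :=
    codeword w'.1 ⁻¹' (Φ ⁻¹' D)
  have prob_A (w' : {w' // w' ≠ w}) : μ.real (A w') = α := by
    rw [hα, uniformOn_codeword_real_preimage w'.2.symm, ncard_preimage_of_injective_subset_range
      hΦ.injective (by simp [hΦ.surjective.range_eq])]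
    simp [Nat.card_fun, ← Nat.card_coe_set_eq]
  have sum_prob_A : ∑ w', μ.real (A w') = ((2 : ℝ) ^ Fintype.card ι - 1) * α := by
    simp [prob_A, Fintype.card_subtype_compl]
  have Pbar_eq : Pbar = μ.real (⋃ w', A w') := by
    have event_eq : codeword w ⁻¹' {c₀} ∩ ⋃ w', A w' =
        {ω | (∃ w', w' ≠ w ∧ Φ (w' ᵥ* ω.1 + ω.2) ∈ D) ∧ w ᵥ* ω.1 + ω.2 = c₀} := by
      ext ω
      simp [A, codeword, and_comm]
    rw [hPbar, uniformOn_real_apply, event_eq]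
    rfl
  have indep_A : Pairwise fun w₁ w₂ => IndepSet (A w₁) (A w₂) μ := fun w₁ w₂ hne =>
    indepSet_preimage_codeword (affineIndependent_triple_of_ne_zmod_two w₁.2.symm w₂.2.symm
      (Subtype.coe_ne_coe.2 hne)) c₀ _ _
  rw [Pbar_eq, ← sum_prob_A]
  exact ⟨min_half_half_sum_measureReal_le_measureReal_iUnion (fun _ => .of_discrete) indep_A,
    le_min measureReal_le_one (measureReal_iUnion_fintype_le A)⟩

end RandomCode

/-- Exponentially tight truncated union bound for the conditional error
probability of a random linear code with an additive decoding metric: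
`min{1/2, (2^k − 2)α/2} ≤ P̄ ≤ min{1, (2^k − 1)α}`, where
`α = |{x⃗' : U(x⃗',y⃗) ≥ U(x⃗,y⃗)}| 2^{−nm}` and `P̄` is the conditional probability, given
`c(w) = c₀`, that some other message `w'` has a metric score at least that of
`x⃗ = Φ(c₀)`. -/
theorem truncated_union_bound_tight
    {X Y : Type*} [Fintype X] [Fintype Y] [Nonempty X] [Nonempty Y]
    (n m : ℕ) (hn : 0 < n) (hm : 0 < m) (hcard : Fintype.card X = 2 ^ m)
    (φ : (Fin m → ZMod 2) → X) (hφ : Function.Bijective φ)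
    (U : X → Y → ℝ) (hU : ∀ x y, 0 < U x y)
    (k : ℕ) (hk : 0 < k) (hkle : k ≤ n * m)
    (w : Fin k → ZMod 2) (c0 : Fin n × Fin m → ZMod 2) (y : Fin n → Y)
    (α : ℝ)
    (hα : α = (Nat.card {x' : Fin n → X //
        (∏ i, U (φ fun j => c0 (i, j)) (y i)) ≤ ∏ i, U (x' i) (y i)} : ℝ) /
      2 ^ (n * m))
    (Pbar : ℝ)
    (hPbar : Pbar =
      (Nat.card {ω : Matrix (Fin k) (Fin n × Fin m) (ZMod 2) × ((Fin n × Fin m) → ZMod 2) //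
          (∃ w', w' ≠ w ∧
            (∏ i, U (φ fun j => c0 (i, j)) (y i)) ≤
              ∏ i, U (φ fun j => (Matrix.vecMul w' ω.1 + ω.2) (i, j)) (y i)) ∧
          Matrix.vecMul w ω.1 + ω.2 = c0} : ℝ) /
      (Nat.card {ω : Matrix (Fin k) (Fin n × Fin m) (ZMod 2) × ((Fin n × Fin m) → ZMod 2) //
          Matrix.vecMul w ω.1 + ω.2 = c0} : ℝ)) :
    min (1 / 2) (((2:ℝ) ^ k - 2) * α / 2) ≤ Pbar ∧
      Pbar ≤ min 1 (((2:ℝ) ^ k - 1) * α) := by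
  have hΦ : Function.Bijective fun (c : Fin n × Fin m → ZMod 2) i => φ fun j => c (i, j) :=
    hφ.comp_left.comp (Equiv.curry (Fin n) (Fin m) (ZMod 2)).bijective
  have hα_nonneg : 0 ≤ α := hα ▸ by positivity
  obtain ⟨lower, upper⟩ := truncated_union_bound_tight_general (α := α) hΦ
    {x' | ∏ i, U (φ fun j => c0 (i, j)) (y i) ≤ ∏ i, U (x' i) (y i)} w c0
    (by rw [Nat.card_prod, Nat.card_fin, Nat.card_fin]; exact hα) hPbar
  rw [Fintype.card_fin] at lower upper
  refine ⟨le_trans ?_ lower, upper⟩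
  gcongr
  norm_num
end

section
/- Let X and Y be finite nonempty alphabets, P_X a probability mass function on X with P_X(x) > 0 for all x, W a channel with W(y|x) > 0 for all x, y and Σ_y W(y|x) = 1 for each x, and ρ ∈ [0,1]. Suppose Z : X → (0,∞) satisfies Z(x) = Σ_y W(y|x)^{1/(1+ρ)} [ Σ_{x'} P_X(x') W(y|x')^{1/(1+ρ)} / Z(x') ]^ρ for all x. Define V(y) = [ Σ_x P_X(x) W(y|x)^{1/(1+ρ)} / Z(x) ]^{1+ρ} and W̃(y|x) = W(y|x)^{1/(1+ρ)} V(y)^{ρ/(1+ρ)} / Z(x). Then: (i) Σ_y W̃(y|x) = 1 for every x ∈ X, i.e., W̃ is a channel; and (ii) V(y) = Σ_x P_X(x) W̃(y|x) for every y ∈ Y, i.e., V is the output distribution induced by P_X and W̃. -/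
/-!
Let `S(y) = Σ_x P(x) K(x,y) / Z(x)` with `K = W ^ {1/(1+ρ)}`, so that `V = S ^ {1+ρ}` and
`V ^ {ρ/(1+ρ)} = S ^ ρ`. Dividing the fixed point equation by `Z(x)` normalizes the rows of
`W̃(y|x) = K(x,y) S(y) ^ ρ / Z(x)`, and averaging `W̃` over `P` gives `S(y) · S(y) ^ ρ = V(y)`.
-/

namespace TiltedChannel

variable {X Y : Type*} [Fintype X] {P Z : X → ℝ} {K : X → Y → ℝ} {ρ : ℝ}

/-- The average `Σ_x P(x) K(x,y) / Z(x)`, whose `(1+ρ)`-th power is the tilted output `V(y)`.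
The kernel `K(x,y)` stands for `W(y|x) ^ {1/(1+ρ)}`. -/
noncomputable def average (P Z : X → ℝ) (K : X → Y → ℝ) (y : Y) : ℝ :=
  ∑ x, P x * K x y / Z x

/-- The tilted output `V(y)`, to be identified with the output distribution of the tilted kernel
under `P`. -/
noncomputable def output (P Z : X → ℝ) (K : X → Y → ℝ) (ρ : ℝ) (y : Y) : ℝ :=
  average P Z K y ^ (1 + ρ)

/-- The tilted kernel `W̃(y|x) = K(x,y) V(y) ^ {ρ/(1+ρ)} / Z(x)`, written `kernel P Z K ρ x y`
with the input letter before the output letter. -/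
noncomputable def kernel (P Z : X → ℝ) (K : X → Y → ℝ) (ρ : ℝ) (x : X) (y : Y) : ℝ :=
  K x y * output P Z K ρ y ^ (ρ / (1 + ρ)) / Z x

theorem average_nonneg {y : Y} (hP : ∀ x, 0 ≤ P x) (hZ : ∀ x, 0 ≤ Z x) (hK : ∀ x, 0 ≤ K x y) :
    0 ≤ average P Z K y :=
  Finset.sum_nonneg fun x _ => div_nonneg (mul_nonneg (hP x) (hK x)) (hZ x)

theorem output_eq_average_mul_rpow {y : Y} (hS : 0 ≤ average P Z K y) (hρ : 1 + ρ ≠ 0) :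
    output P Z K ρ y = average P Z K y * average P Z K y ^ ρ :=
  Real.rpow_one_add' hS hρ

theorem output_rpow_div {y : Y} (hS : 0 ≤ average P Z K y) (hρ : 1 + ρ ≠ 0) :
    output P Z K ρ y ^ (ρ / (1 + ρ)) = average P Z K y ^ ρ := by
  rw [output, ← Real.rpow_mul hS, mul_div_cancel₀ ρ hρ]

theorem kernel_eq_mul_average_rpow_div {y : Y} (hS : 0 ≤ average P Z K y) (hρ : 1 + ρ ≠ 0)
    (x : X) : kernel P Z K ρ x y = K x y * average P Z K y ^ ρ / Z x := by
  rw [kernel, output_rpow_div hS hρ]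

theorem sum_kernel_eq_one [Fintype Y] {x : X} (hS : ∀ y, 0 ≤ average P Z K y) (hρ : 1 + ρ ≠ 0)
    (hZ : Z x ≠ 0) (hfix : Z x = ∑ y, K x y * average P Z K y ^ ρ) :
    ∑ y, kernel P Z K ρ x y = 1 :=
  calc ∑ y, kernel P Z K ρ x y
      = ∑ y, K x y * average P Z K y ^ ρ / Z x :=
        Finset.sum_congr rfl fun y _ => kernel_eq_mul_average_rpow_div (hS y) hρ x
    _ = (∑ y, K x y * average P Z K y ^ ρ) / Z x := (Finset.sum_div ..).symm
    _ = 1 := by rw [← hfix, div_self hZ]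

theorem output_eq_sum_mul_kernel {y : Y} (hS : 0 ≤ average P Z K y) (hρ : 1 + ρ ≠ 0) :
    output P Z K ρ y = ∑ x, P x * kernel P Z K ρ x y :=
  calc output P Z K ρ y
      = (∑ x, P x * K x y / Z x) * average P Z K y ^ ρ := output_eq_average_mul_rpow hS hρ
    _ = ∑ x, P x * K x y / Z x * average P Z K y ^ ρ := Finset.sum_mul ..
    _ = ∑ x, P x * kernel P Z K ρ x y := Finset.sum_congr rfl fun x _ => by
        rw [kernel_eq_mul_average_rpow_div hS hρ]; ring

end TiltedChannel

open TiltedChannel in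
-- Since `P > 0`, an output with `V(y) = 0` has `K(x,y) = 0` for all `x`, so for `ρ < 0` the
-- junk value `0 ^ ρ` only ever occurs multiplied by `0`.
theorem tilted_kernel_is_channel_with_output_V_general
    {X Y : Type*} [Fintype X] [Fintype Y] {P Z : X → ℝ} {K : X → Y → ℝ} {ρ : ℝ}
    (hP : ∀ x, 0 < P x) (hK : ∀ x y, 0 ≤ K x y) (hρ : -1 < ρ) (hZ : ∀ x, 0 < Z x)
    (hfix : ∀ x, Z x = ∑ y, K x y * average P Z K y ^ ρ) :
    (∀ x, ∑ y, kernel P Z K ρ x y = 1) ∧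
      ∀ y, output P Z K ρ y = ∑ x, P x * kernel P Z K ρ x y := by
  have hS (y : Y) : 0 ≤ average P Z K y :=
    average_nonneg (fun x => (hP x).le) (fun x => (hZ x).le) fun x => hK x y
  have hρ' : 1 + ρ ≠ 0 := by linarith
  exact ⟨fun x => sum_kernel_eq_one hS hρ' (hZ x).ne' (hfix x),
    fun y => output_eq_sum_mul_kernel (hS y) hρ'⟩

/-- Given a positive solution `Z` of the fixed point equations, the tilted
kernel `W̃(y|x) = W(y|x)^{1/(1+ρ)} V(y)^{ρ/(1+ρ)}/Z(x)`, with
`V(y) = [Σ_x P_X(x) W(y|x)^{1/(1+ρ)}/Z(x)]^{1+ρ}`, is a channel, and `V` is its output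
distribution under input distribution `P_X`. -/
theorem tilted_kernel_is_channel_with_output_V
    {X Y : Type*} [Fintype X] [Fintype Y] [Nonempty X] [Nonempty Y]
    (P : X → ℝ) (hP0 : ∀ x, 0 < P x) (hP1 : ∑ x, P x = 1)
    (W : X → Y → ℝ) (hW : ∀ x y, 0 < W x y) (hWsum : ∀ x, ∑ y, W x y = 1)
    (ρ : ℝ) (hρ : ρ ∈ Set.Icc (0:ℝ) 1)
    (Z : X → ℝ) (hZpos : ∀ x, 0 < Z x)
    (hZfix : ∀ x, Z x = ∑ y, W x y ^ (1 / (1 + ρ)) *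
      (∑ x', P x' * W x' y ^ (1 / (1 + ρ)) / Z x') ^ ρ) :
    (∀ x, ∑ y,
        W x y ^ (1 / (1 + ρ)) *
            ((∑ x', P x' * W x' y ^ (1 / (1 + ρ)) / Z x') ^ (1 + ρ)) ^ (ρ / (1 + ρ)) /
          Z x = 1) ∧
    (∀ y, (∑ x', P x' * W x' y ^ (1 / (1 + ρ)) / Z x') ^ (1 + ρ) =
      ∑ x, P x *
        (W x y ^ (1 / (1 + ρ)) *
            ((∑ x', P x' * W x' y ^ (1 / (1 + ρ)) / Z x') ^ (1 + ρ)) ^ (ρ / (1 + ρ)) /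
          Z x)) := by
  have hK (x : X) (y : Y) : 0 ≤ W x y ^ (1 / (1 + ρ)) := Real.rpow_nonneg (hW x y).le _
  exact tilted_kernel_is_channel_with_output_V_general hP0 hK (by linarith [hρ.1]) hZpos hZfix
end

section
/- Let X and Y be finite nonempty alphabets, P_X a probability mass function on X with P_X(x) > 0 for all x, W a channel with W(y|x) > 0 for all x, y and Σ_y W(y|x) = 1 for each x, and ρ ∈ [0,1]. Suppose Z : X → (0,∞) satisfies Z(x) = Σ_y W(y|x)^{1/(1+ρ)} [ Σ_{x'} P_X(x') W(y|x')^{1/(1+ρ)} / Z(x') ]^ρ for all x. Define V(y) = [ Σ_x P_X(x) W(y|x)^{1/(1+ρ)} / Z(x) ]^{1+ρ}, W̃(y|x) = W(y|x)^{1/(1+ρ)} V(y)^{ρ/(1+ρ)} / Z(x), and U_*(x|y) = ( P_X(x) W(y|x)^{1/(1+ρ)} / Z(x) ) / ( Σ_{x'} P_X(x') W(y|x')^{1/(1+ρ)} / Z(x') ). Then for all x ∈ X and y ∈ Y: (i) U_*(x|y) = P_X(x) W̃(y|x) / Σ_{x'} P_X(x') W̃(y|x'), i.e., U_* is the posterior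 induced by P_X and W̃; and (ii) W(y|x) / ( W̃(y|x) · U_*(x|y)^ρ ) = Z(x)^{1+ρ} / P_X(x)^ρ, which does not depend on y. -/
/-!
Put `K = W ^ (1 / (1 + ρ)) / Z` and let `S(y) = ∑ x, P(x) K(x, y)` be its output weight. Then
`U_*` is the posterior of `P` and `K`, while `W̃(y|x) = K(x, y) S(y) ^ ρ` differs from `K` only by
a factor depending on the output, and such a factor cancels in Bayes' formula. In the product
`W̃ U_* ^ ρ` the powers of `S` cancel as well, leaving `P ^ ρ K ^ (1 + ρ) = P ^ ρ W / Z ^ (1 + ρ)`.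
-/

section Posterior

variable {X Y 𝕜 : Type*} [Fintype X]

/-- The output weight `∑ x, p x * K x y` of `y` when the input `x` has weight `p x` and is sent
through the kernel `K`. Neither `p` nor `K` need be normalized. -/
def outputWeight [NonUnitalNonAssocSemiring 𝕜] (p : X → 𝕜) (K : X → Y → 𝕜) (y : Y) : 𝕜 :=
  ∑ x, p x * K x y

/-- The posterior weight of the input `x` given the output `y`, by Bayes' formula for the
prior `p` and the kernel `K`; it is `0` where the output weight vanishes. -/
def bayesPosterior [Semifield 𝕜] (p : X → 𝕜) (K : X → Y → 𝕜) (x : X) (y : Y) : 𝕜 :=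
  p x * K x y / outputWeight p K y

theorem outputWeight_pos [Semiring 𝕜] [PartialOrder 𝕜] [IsStrictOrderedRing 𝕜] [Nonempty X]
    {p : X → 𝕜} {K : X → Y → 𝕜} {y : Y} (hp : ∀ x, 0 < p x) (hK : ∀ x, 0 < K x y) :
    0 < outputWeight p K y :=
  Finset.sum_pos (fun x _ => mul_pos (hp x) (hK x)) Finset.univ_nonempty

theorem outputWeight_mul_right [NonUnitalSemiring 𝕜] (p : X → 𝕜) (K : X → Y → 𝕜) (c : Y → 𝕜)
    (y : Y) : outputWeight p (fun x y => K x y * c y) y = outputWeight p K y * c y := by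
  simp only [outputWeight, Finset.sum_mul, mul_assoc]

theorem bayesPosterior_mul_right [Semifield 𝕜] (p : X → 𝕜) (K : X → Y → 𝕜) (c : Y → 𝕜) (x : X)
    {y : Y} (hc : c y ≠ 0) :
    bayesPosterior p (fun x y => K x y * c y) x y = bayesPosterior p K x y := by
  rw [bayesPosterior, outputWeight_mul_right, ← mul_assoc, mul_div_mul_right _ _ hc,
    bayesPosterior]

theorem mul_outputWeight_rpow_mul_bayesPosterior_rpow {p : X → ℝ} {K : X → Y → ℝ} {x : X} {y : Y}
    (hp : 0 ≤ p x) (hK : 0 < K x y) (hS : 0 < outputWeight p K y) (ρ : ℝ) :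
    K x y * outputWeight p K y ^ ρ * bayesPosterior p K x y ^ ρ = p x ^ ρ * K x y ^ (1 + ρ) := by
  have hSρ : outputWeight p K y ^ ρ ≠ 0 := (Real.rpow_pos_of_pos hS ρ).ne'
  calc K x y * outputWeight p K y ^ ρ * bayesPosterior p K x y ^ ρ
      = K x y * outputWeight p K y ^ ρ * (p x ^ ρ * K x y ^ ρ / outputWeight p K y ^ ρ) := by
        rw [bayesPosterior, Real.div_rpow (by positivity) hS.le, Real.mul_rpow hp hK.le]
    _ = p x ^ ρ * (K x y * K x y ^ ρ) := by field_simp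
    _ = p x ^ ρ * K x y ^ (1 + ρ) := by rw [Real.rpow_add hK, Real.rpow_one]

end Posterior

section TiltedKernel

variable {X Y : Type*}

/-- The unnormalized kernel `W(y|x) ^ (1 / (1 + ρ)) / Z(x)`, through which both `W̃` and `U_*` are
expressed. -/
noncomputable def tiltedKernel (W : X → Y → ℝ) (ρ : ℝ) (Z : X → ℝ) (x : X) (y : Y) : ℝ :=
  W x y ^ (1 / (1 + ρ)) / Z x

theorem sum_mul_rpow_div_eq_outputWeight [Fintype X] (P : X → ℝ) (W : X → Y → ℝ) (ρ : ℝ)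
    (Z : X → ℝ) (y : Y) :
    ∑ x, P x * W x y ^ (1 / (1 + ρ)) / Z x = outputWeight P (tiltedKernel W ρ Z) y := by
  simp only [outputWeight, tiltedKernel, mul_div_assoc]

variable {W : X → Y → ℝ} {ρ : ℝ} {Z : X → ℝ} {x : X} {y : Y}

theorem tiltedKernel_pos (hW : 0 < W x y) (hZ : 0 < Z x) : 0 < tiltedKernel W ρ Z x y :=
  div_pos (Real.rpow_pos_of_pos hW _) hZ

theorem tiltedKernel_rpow (hW : 0 ≤ W x y) (hZ : 0 ≤ Z x) (hρ : 1 + ρ ≠ 0) :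
    tiltedKernel W ρ Z x y ^ (1 + ρ) = W x y / Z x ^ (1 + ρ) := by
  rw [tiltedKernel, Real.div_rpow (Real.rpow_nonneg hW _) hZ, one_div, Real.rpow_inv_rpow hW hρ]

end TiltedKernel

theorem optimal_metric_saturation_conditions_general {X Y : Type*} [Fintype X]
    (P : X → ℝ) (hP : ∀ x, 0 < P x)
    (W : X → Y → ℝ) (hW : ∀ x y, 0 < W x y)
    (ρ : ℝ) (hρ : 1 + ρ ≠ 0)
    (Z : X → ℝ) (hZ : ∀ x, 0 < Z x)
    (V : Y → ℝ)
    (hV : ∀ y, V y = (∑ x', P x' * W x' y ^ (1 / (1 + ρ)) / Z x') ^ (1 + ρ))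
    (Wt : X → Y → ℝ)
    (hWt : ∀ x y, Wt x y = W x y ^ (1 / (1 + ρ)) * V y ^ (ρ / (1 + ρ)) / Z x)
    (Ustar : X → Y → ℝ)
    (hUstar : ∀ x y, Ustar x y =
      (P x * W x y ^ (1 / (1 + ρ)) / Z x) / ∑ x', P x' * W x' y ^ (1 / (1 + ρ)) / Z x') :
    (∀ x y, Ustar x y = P x * Wt x y / ∑ x', P x' * Wt x' y) ∧
    (∀ x y, W x y / (Wt x y * Ustar x y ^ ρ) = Z x ^ (1 + ρ) / P x ^ ρ) := by
  let K := tiltedKernel W ρ Z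
  have hK x y : 0 < K x y := tiltedKernel_pos (hW x y) (hZ x)
  have hS (x : X) (y : Y) : 0 < outputWeight P K y :=
    have : Nonempty X := ⟨x⟩
    outputWeight_pos hP fun x => hK x y
  have hU x y : Ustar x y = bayesPosterior P K x y := by
    rw [hUstar, sum_mul_rpow_div_eq_outputWeight, mul_div_assoc (P x)]
    rfl
  have hWtK x y : Wt x y = K x y * outputWeight P K y ^ ρ := by
    rw [hWt, hV, sum_mul_rpow_div_eq_outputWeight, ← Real.rpow_mul (hS x y).le,
      mul_div_cancel₀ ρ hρ, mul_div_right_comm]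
    rfl
  refine ⟨fun x y => ?_, fun x y => ?_⟩
  · simp only [hU, hWtK]
    exact (bayesPosterior_mul_right P K (fun y => outputWeight P K y ^ ρ) x
      (Real.rpow_pos_of_pos (hS x y) ρ).ne').symm
  · have hprod : Wt x y * Ustar x y ^ ρ = P x ^ ρ * (W x y / Z x ^ (1 + ρ)) := by
      rw [hWtK, hU, mul_outputWeight_rpow_mul_bayesPosterior_rpow (hP x).le (hK x y) (hS x y),
        tiltedKernel_rpow (hW x y).le (hZ x).le hρ]
    rw [hprod, mul_comm, ← div_div, div_div_cancel₀ (hW x y).ne']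

/-- Saturation conditions for the optimal metric. Given a positive solution
`Z` of the fixed point equations, and with
`V(y) = [Σ_x P_X(x) W(y|x)^{1/(1+ρ)}/Z(x)]^{1+ρ}`,
`W̃(y|x) = W(y|x)^{1/(1+ρ)} V(y)^{ρ/(1+ρ)}/Z(x)`, and
`U_*(x|y) = (P_X(x) W(y|x)^{1/(1+ρ)}/Z(x)) / Σ_{x'} P_X(x') W(y|x')^{1/(1+ρ)}/Z(x')`,
the metric `U_*` is the posterior induced by `P_X` and `W̃`, and the ratio
`W(y|x)/(W̃(y|x) U_*(x|y)^ρ) = Z(x)^{1+ρ}/P_X(x)^ρ` does not depend on `y`. -/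
theorem optimal_metric_saturation_conditions
    {X Y : Type*} [Fintype X] [Fintype Y] [Nonempty X] [Nonempty Y]
    (P : X → ℝ) (hP0 : ∀ x, 0 < P x) (hP1 : ∑ x, P x = 1)
    (W : X → Y → ℝ) (hW : ∀ x y, 0 < W x y) (hWsum : ∀ x, ∑ y, W x y = 1)
    (ρ : ℝ) (hρ : ρ ∈ Set.Icc (0:ℝ) 1)
    (Z : X → ℝ) (hZpos : ∀ x, 0 < Z x)
    (hZfix : ∀ x, Z x = ∑ y, W x y ^ (1 / (1 + ρ)) *
      (∑ x', P x' * W x' y ^ (1 / (1 + ρ)) / Z x') ^ ρ)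
    (V : Y → ℝ)
    (hV : ∀ y, V y = (∑ x', P x' * W x' y ^ (1 / (1 + ρ)) / Z x') ^ (1 + ρ))
    (Wt : X → Y → ℝ)
    (hWt : ∀ x y, Wt x y = W x y ^ (1 / (1 + ρ)) * V y ^ (ρ / (1 + ρ)) / Z x)
    (Ustar : X → Y → ℝ)
    (hUstar : ∀ x y, Ustar x y =
      (P x * W x y ^ (1 / (1 + ρ)) / Z x) /
        ∑ x', P x' * W x' y ^ (1 / (1 + ρ)) / Z x') :
    (∀ x y, Ustar x y = P x * Wt x y / ∑ x', P x' * Wt x' y) ∧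
    (∀ x y, W x y / (Wt x y * Ustar x y ^ ρ) = Z x ^ (1 + ρ) / P x ^ ρ) :=
  optimal_metric_saturation_conditions_general P hP0 W hW ρ (by linarith [hρ.1]) Z hZpos
    V hV Wt hWt Ustar hUstar
end
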